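/- arXiv:1111.5901 — 3 statements merged into one kernel-verified Lean document; each statement's English description precedes it below -/
import Mathlib

section
/- There exists a built-in permutation π = (πₙ)ₙ∈ℕ, where each πₙ is a permutation of {0,...,n}, such that: (i) there is a single first-order formula over the language with a binary relation symbol for < and a binary relation symbol for the graph of π which, evaluated in the structure with universe {0,...,n}, < restricted to {0,...,n}, and the relation {(i,j) : πₙ(i) = j}, defines Bit restricted to {0,...,n}, for every n; and (ii) there is a single first-order formula over the language with one binary relation symbol for Bit which, evaluated in the finite prefix structure ({0,...,n}, Bit), defines the relation {(i,j) : πₙ(i) = j}, for every n. -/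
open FirstOrder Language


/-- Relation symbols of the language with a single binary relation `Bit`. -/
inductive BitRel : ℕ → Type
  | bit : BitRel 2

/-- The language with a single binary relation symbol for `Bit`. -/
def LBit : Language := ⟨fun _ => Empty, BitRel⟩

/-- The finite prefix structure `({0,...,n}, Bit)`. -/
def bitStruct (n : ℕ) : LBit.Structure (Fin (n + 1)) where
  funMap := fun f _ => f.elim
  RelMap := fun r v =>
    match r with
    | .bit => Nat.testBit (v 0 : ℕ) (v 1 : ℕ) = true

/-- Relation symbols of a language with two binary relation symbols:
one for `<` and one for the graph of a permutation. -/
inductive PermRel : ℕ → Type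
  | lt : PermRel 2
  | perm : PermRel 2

/-- The language with binary relation symbols for `<` and for the graph of a
built-in permutation. -/
def LPerm : Language := ⟨fun _ => Empty, PermRel⟩

/-- The structure `({0,...,n}, <, graph of πₙ)` for a built-in permutation `π`. -/
def permStruct (π : (n : ℕ) → Equiv.Perm (Fin (n + 1))) (n : ℕ) :
    LPerm.Structure (Fin (n + 1)) where
  funMap := fun f _ => f.elim
  RelMap := fun r v =>
    match r with
    | .lt => (v 0 : ℕ) < (v 1 : ℕ)
    | .perm => π n (v 0) = v 1


/-!
For `4 ≤ n` let `T = 2 ^ m` and `P = 4 * T` be the powers of `2` with `P ≤ n < 2 * P`. The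
permutation acts on the numbers `4 * y + c` below `P` through a different map of `y < T` for each
residue `c`, arranged so that comparing values reveals the relations used for decoding: residue `0`
gives `4 * y ↦ y`, residue `1` the order of the reversed binary words, and residues `2` and `3` are
interleaved so as to give the exchange of `i < m` with `2 ^ m - 2 ^ i`. The multiples of `2 ^ i`
below `T` are the words that are at most `2 ^ m - 2 ^ i` in the order of the reversed words, so
divisibility by powers of `2`, and with it `Bit` below `T`, becomes definable; `4 * y ↦ y` extends
`Bit` to the numbers below `P`. The remaining numbers `P + r ≤ n` are inserted into the cycles after
`r`, which makes `r ↦ P + r` definable.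

Conversely, numbers are compared at the highest place where they differ, so `Bit` defines the order
of the numbers up to `n` once it defines the order of the bit positions. Two such reductions lead to
the numbers `i` with `2 ^ 2 ^ i ≤ n`, whose order is coded by a single number up to `n`. With the
order, addition is definable by carry lookahead, and then so is the permutation.
-/

/-! ### Uniform definability -/

section UniformlyDefinable

variable {L : FirstOrder.Language.{0, 0}}

/-- The relations `R n` on `{0,...,n}` are defined in the structures `S n`, for all `n ∈ I`, by one
and the same formula. The relations are given on all of `ℕ`, with the arguments indexed by `α`;
only their restrictions to `{0,...,n}` matter. -/
def UniformlyDefinable (S : ∀ n, L.Structure (Fin (n + 1))) (I : Set ℕ) {α : Type}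
    (R : ℕ → (α → ℕ) → Prop) : Prop :=
  ∃ φ : L.Formula α, ∀ n ∈ I, ∀ v : α → Fin (n + 1),
    @Formula.Realize L (Fin (n + 1)) (S n) α φ v ↔ R n (fun a => (v a : ℕ))

/-- Uniform definability of unary relations. Quantifying over the index type makes the notion stable
under substitution of variables; the same holds for the binary and ternary versions. -/
def UniformlyDefinable₁ (S : ∀ n, L.Structure (Fin (n + 1))) (I : Set ℕ) (R : ℕ → ℕ → Prop) :
    Prop :=
  ∀ ⦃α : Type⦄ (a : α), UniformlyDefinable S I fun n v => R n (v a)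

/-- Uniform definability of binary relations. -/
def UniformlyDefinable₂ (S : ∀ n, L.Structure (Fin (n + 1))) (I : Set ℕ)
    (R : ℕ → ℕ → ℕ → Prop) : Prop :=
  ∀ ⦃α : Type⦄ (a b : α), UniformlyDefinable S I fun n v => R n (v a) (v b)

/-- Uniform definability of ternary relations. -/
def UniformlyDefinable₃ (S : ∀ n, L.Structure (Fin (n + 1))) (I : Set ℕ)
    (R : ℕ → ℕ → ℕ → ℕ → Prop) : Prop :=
  ∀ ⦃α : Type⦄ (a b c : α), UniformlyDefinable S I fun n v => R n (v a) (v b) (v c)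

variable {S : ∀ n, L.Structure (Fin (n + 1))} {I : Set ℕ} {α β : Type}

namespace UniformlyDefinable

variable {P Q : ℕ → (α → ℕ) → Prop}

theorem congr (h : UniformlyDefinable S I P)
    (e : ∀ n ∈ I, ∀ v : α → ℕ, (∀ a, v a ≤ n) → (P n v ↔ Q n v)) : UniformlyDefinable S I Q := by
  obtain ⟨φ, hφ⟩ := h
  exact ⟨φ, fun n hn v => (hφ n hn v).trans (e n hn _ fun a => Nat.lt_succ_iff.1 (v a).2)⟩

theorem not (h : UniformlyDefinable S I P) : UniformlyDefinable S I fun n v => ¬ P n v := by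
  obtain ⟨φ, hφ⟩ := h
  exact ⟨φ.not, fun n hn v => by rw [Formula.realize_not, hφ n hn]⟩

theorem imp (h : UniformlyDefinable S I P) (h' : UniformlyDefinable S I Q) :
    UniformlyDefinable S I fun n v => P n v → Q n v := by
  obtain ⟨φ, hφ⟩ := h
  obtain ⟨ψ, hψ⟩ := h'
  exact ⟨φ.imp ψ, fun n hn v => by rw [Formula.realize_imp, hφ n hn, hψ n hn]⟩

theorem and (h : UniformlyDefinable S I P) (h' : UniformlyDefinable S I Q) :
    UniformlyDefinable S I fun n v => P n v ∧ Q n v :=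
  (h.imp h'.not).not.congr fun n _ v _ => by tauto

theorem or (h : UniformlyDefinable S I P) (h' : UniformlyDefinable S I Q) :
    UniformlyDefinable S I fun n v => P n v ∨ Q n v :=
  (h.not.imp h').congr fun n _ v _ => by tauto

theorem iff (h : UniformlyDefinable S I P) (h' : UniformlyDefinable S I Q) :
    UniformlyDefinable S I fun n v => (P n v ↔ Q n v) :=
  ((h.imp h').and (h'.imp h)).congr fun n _ v _ => by tauto

theorem relabel (h : UniformlyDefinable S I P) (g : α → β) :
    UniformlyDefinable S I fun n v => P n fun a => v (g a) := by
  obtain ⟨φ, hφ⟩ := h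
  exact ⟨φ.relabel g, fun n hn v => by rw [Formula.realize_relabel, hφ n hn]; rfl⟩

theorem ex {R : ℕ → (α → ℕ) → ℕ → Prop}
    (h : UniformlyDefinable S I (α := Option α) fun n v => R n (fun a => v (some a)) (v none)) :
    UniformlyDefinable S I fun n v => ∃ x ≤ n, R n v x := by
  obtain ⟨φ, hφ⟩ := h.relabel (β := α ⊕ Unit) fun o => o.elim (Sum.inr ()) Sum.inl
  refine ⟨φ.iExs Unit, fun n hn v => ?_⟩
  rw [Formula.realize_iExs]
  constructor
  · rintro ⟨i, hi⟩
    exact ⟨i (), Nat.lt_succ_iff.1 (i ()).2, (hφ n hn _).1 hi⟩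
  · rintro ⟨x, hx, hR⟩
    exact ⟨fun _ => ⟨x, Nat.lt_succ_iff.2 hx⟩, (hφ n hn _).2 hR⟩

theorem all {R : ℕ → (α → ℕ) → ℕ → Prop}
    (h : UniformlyDefinable S I (α := Option α) fun n v => R n (fun a => v (some a)) (v none)) :
    UniformlyDefinable S I fun n v => ∀ x ≤ n, R n v x :=
  (ex (R := fun n v x => ¬ R n v x) h.not).not.congr fun n _ v _ => by
    push Not; rfl

theorem of_compl {p : ℕ → Prop} (hp : UniformlyDefinable S Set.univ fun n (_ : α → ℕ) => p n)
    (h : UniformlyDefinable S {n | p n} P) (h' : UniformlyDefinable S {n | ¬ p n} P) :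
    UniformlyDefinable S Set.univ P := by
  obtain ⟨χ, hχ⟩ := hp
  obtain ⟨φ, hφ⟩ := h
  obtain ⟨ψ, hψ⟩ := h'
  refine ⟨(χ ⊓ φ) ⊔ (χ.not ⊓ ψ), fun n hn v => ?_⟩
  simp only [Formula.realize_sup, Formula.realize_inf, Formula.realize_not, hχ n hn]
  by_cases hpn : p n
  · simp only [hpn, true_and, not_true_eq_false, false_and, or_false, hφ n hpn]
  · simp only [hpn, false_and, not_false_eq_true, true_and, false_or, hψ n hpn]

end UniformlyDefinable

theorem uniformlyDefinable_const (p : Prop) :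
    UniformlyDefinable S I fun _ (_ : α → ℕ) => p := by
  by_cases hp : p
  · exact ⟨⊤, fun _ _ _ => iff_of_true (Formula.realize_top.2 trivial) hp⟩
  · exact ⟨⊥, fun _ _ _ => iff_of_false id hp⟩

theorem uniformlyDefinable₂_eq : UniformlyDefinable₂ S I fun _ x y => x = y := fun _ a b =>
  ⟨Term.equal (Term.var a) (Term.var b), fun _ _ _ => by simp [Formula.realize_equal, Fin.ext_iff]⟩

theorem UniformlyDefinable₁.congr {P Q : ℕ → ℕ → Prop} (h : UniformlyDefinable₁ S I P)
    (e : ∀ n ∈ I, ∀ x ≤ n, (P n x ↔ Q n x)) : UniformlyDefinable₁ S I Q :=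
  fun _ a => (h a).congr fun n hn _ hv => e n hn _ (hv a)

theorem UniformlyDefinable₂.congr {P Q : ℕ → ℕ → ℕ → Prop} (h : UniformlyDefinable₂ S I P)
    (e : ∀ n ∈ I, ∀ x ≤ n, ∀ y ≤ n, (P n x y ↔ Q n x y)) : UniformlyDefinable₂ S I Q :=
  fun _ a b => (h a b).congr fun n hn _ hv => e n hn _ (hv a) _ (hv b)

theorem UniformlyDefinable₃.congr {P Q : ℕ → ℕ → ℕ → ℕ → Prop} (h : UniformlyDefinable₃ S I P)
    (e : ∀ n ∈ I, ∀ x ≤ n, ∀ y ≤ n, ∀ z ≤ n, (P n x y z ↔ Q n x y z)) :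
    UniformlyDefinable₃ S I Q :=
  fun _ a b c => (h a b c).congr fun n hn _ hv => e n hn _ (hv a) _ (hv b) _ (hv c)

/-! ### Consequences of having the order -/

variable (hlt : UniformlyDefinable₂ S I fun _ x y => x < y)
include hlt

theorem uniformlyDefinable₂_le : UniformlyDefinable₂ S I fun _ x y => x ≤ y :=
  fun _ a b => (hlt b a).not.congr fun _ _ _ _ => not_lt

theorem uniformlyDefinable₂_eq_succ : UniformlyDefinable₂ S I fun _ x y => y = x + 1 := by
  have h : UniformlyDefinable₂ S I fun n x y => x < y ∧ ∀ z ≤ n, ¬ (x < z ∧ z < y) := by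
    intro α a b
    apply_rules [UniformlyDefinable.and, UniformlyDefinable.all, UniformlyDefinable.not]
  refine h.congr fun n _ x hx y hy => ⟨?_, ?_⟩
  · rintro ⟨hxy, hgap⟩
    by_contra hne
    exact hgap (x + 1) (by omega) (by omega)
  · rintro rfl
    exact ⟨by omega, fun z _ => by omega⟩

theorem uniformlyDefinable₂_eq_add_const (k : ℕ) :
    UniformlyDefinable₂ S I fun _ x y => y = x + k := by
  induction k with
  | zero => exact fun _ a b => uniformlyDefinable₂_eq b a
  | succ k ih =>
    have hsucc := uniformlyDefinable₂_eq_succ hlt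
    have h : UniformlyDefinable₂ S I fun n x y => ∃ z ≤ n, z = x + k ∧ y = z + 1 := by
      intro α a b
      apply_rules [UniformlyDefinable.ex, UniformlyDefinable.and]
    refine h.congr fun n _ x _ y hy => ⟨?_, fun hyx => ⟨x + k, by omega, rfl, by omega⟩⟩
    rintro ⟨z, -, hz, hyz⟩
    omega

theorem uniformlyDefinable₁_eq_const (k : ℕ) : UniformlyDefinable₁ S I fun _ x => x = k := by
  have hadd := uniformlyDefinable₂_eq_add_const hlt k
  have h : UniformlyDefinable₁ S I fun n x => ∃ z ≤ n, (∀ w ≤ n, ¬ w < z) ∧ x = z + k := by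
    intro α a
    apply_rules [UniformlyDefinable.ex, UniformlyDefinable.and, UniformlyDefinable.all,
      UniformlyDefinable.not]
  refine h.congr fun n _ x _ => ⟨fun ⟨z, _, hz, hxz⟩ => ?_, fun hx => ?_⟩
  · have := hz 0 (Nat.zero_le n)
    omega
  · exact ⟨0, Nat.zero_le n, fun w _ => Nat.not_lt_zero w, by omega⟩

theorem uniformlyDefinable_const_le (k : ℕ) :
    UniformlyDefinable S I fun n (_ : α → ℕ) => k ≤ n := by
  have hconst := uniformlyDefinable₁_eq_const hlt k
  have h : UniformlyDefinable S I fun n (_ : α → ℕ) => ∃ x ≤ n, x = k :=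
    UniformlyDefinable.ex (hconst none)
  exact h.congr fun n _ _ _ => ⟨fun ⟨_, hx, hxk⟩ => hxk ▸ hx, fun hk => ⟨k, hk, rfl⟩⟩

end UniformlyDefinable

/-! ### Binary arithmetic -/

theorem le_of_two_pow_le {i n : ℕ} (h : 2 ^ i ≤ n) : i ≤ n :=
  Nat.lt_two_pow_self.le.trans h

theorem lt_of_testBit {a i : ℕ} (h : a.testBit i) : i < a :=
  Nat.lt_two_pow_self.trans_le (Nat.ge_two_pow_of_testBit h)

theorem eq_iff_forall_testBit_le {n x y : ℕ} (hx : x < 2 ^ (n + 1)) (hy : y < 2 ^ (n + 1)) :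
    x = y ↔ ∀ t ≤ n, (x.testBit t ↔ y.testBit t) := by
  refine ⟨fun h _ _ => by rw [h], fun h => Nat.eq_of_testBit_eq fun t => ?_⟩
  rcases le_or_gt t n with ht | ht
  · exact Bool.eq_iff_iff.2 (h t ht)
  · have hpow : 2 ^ (n + 1) ≤ 2 ^ t := Nat.pow_le_pow_right two_pos ht
    rw [Nat.testBit_lt_two_pow (hx.trans_le hpow), Nat.testBit_lt_two_pow (hy.trans_le hpow)]

theorem lt_two_pow_succ_of_le_two_mul {n x : ℕ} (h : x ≤ 2 * n) : x < 2 ^ (n + 1) := by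
  have : n < 2 ^ n := Nat.lt_two_pow_self
  rw [pow_succ]
  omega

theorem lt_two_pow_iff_forall_testBit {x k : ℕ} : x < 2 ^ k ↔ ∀ t, x.testBit t → t < k := by
  constructor
  · intro hx t ht
    exact (Nat.pow_lt_pow_iff_right one_lt_two).1 ((Nat.ge_two_pow_of_testBit ht).trans_lt hx)
  · intro h
    refine Nat.lt_pow_two_of_testBit _ fun t hkt => Bool.eq_false_iff.2 fun ht => ?_
    exact (h t ht).not_ge hkt

theorem two_pow_dvd_iff_forall_testBit {x i : ℕ} : 2 ^ i ∣ x ↔ ∀ t < i, ¬ x.testBit t := by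
  rw [Nat.dvd_iff_mod_eq_zero]
  constructor
  · intro h t ht hxt
    simpa [h, ht, hxt] using Nat.testBit_mod_two_pow x i t
  · intro h
    refine Nat.zero_of_testBit_eq_false fun t => ?_
    rw [Nat.testBit_mod_two_pow]
    simpa using h t

theorem testBit_two_pow_sub_two_pow {i k : ℕ} (h : i ≤ k) (t : ℕ) :
    (2 ^ k - 2 ^ i).testBit t ↔ i ≤ t ∧ t < k := by
  obtain ⟨d, rfl⟩ := Nat.exists_eq_add_of_le h
  rw [show 2 ^ (i + d) - 2 ^ i = 2 ^ i * (2 ^ d - 1) by rw [Nat.mul_sub, pow_add, mul_one],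
    Nat.testBit_two_pow_mul, Nat.testBit_two_pow_sub_one]
  simp only [Bool.and_eq_true, decide_eq_true_eq]
  omega

theorem testBit_four_mul_add {c : ℕ} (hc : c < 4) (y i : ℕ) : (4 * y + c).testBit i ↔
    (i = 0 ∧ (c = 1 ∨ c = 3)) ∨ (i = 1 ∧ (c = 2 ∨ c = 3)) ∨ ∃ j, i = j + 2 ∧ y.testBit j := by
  rw [show 4 * y = 2 ^ 2 * y by omega, Nat.testBit_two_pow_mul_add _ (by omega)]
  rcases i with _ | _ | i
  · interval_cases c <;> simp
  · interval_cases c <;> simp [Nat.testBit_succ]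
  · simp

theorem testBit_add_two_pow {x k : ℕ} (hx : x < 2 ^ k) (t : ℕ) :
    (x + 2 ^ k).testBit t ↔ t = k ∨ x.testBit t := by
  rw [Nat.add_comm, ← mul_one (2 ^ k), Nat.testBit_two_pow_mul_add _ hx]
  split_ifs with ht
  · simp [ht.ne]
  · have hxt : ¬ x.testBit t := fun h => ht (lt_two_pow_iff_forall_testBit.1 hx t h)
    rw [Nat.testBit_one_eq_true_iff_self_eq_zero, or_iff_left hxt]
    omega

-- The bit is `1` iff the largest multiple of `2 ^ i` up to `a` is an odd multiple.
theorem testBit_iff_exists_two_pow_dvd {a i : ℕ} : a.testBit i ↔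
    ∃ x ≤ a, 2 ^ i ∣ x ∧ ∀ y, x ≤ y → y ≤ a → ¬ 2 ^ (i + 1) ∣ y := by
  have hpos : 0 < 2 ^ i := by positivity
  have hdvd (c : ℕ) : 2 ^ (i + 1) ∣ 2 ^ i * c ↔ 2 ∣ c := by
    rw [pow_succ, Nat.mul_dvd_mul_iff_left hpos]
  have hbit : a.testBit i ↔ ¬ 2 ∣ a / 2 ^ i := by
    simp only [Nat.testBit_eq_decide_div_mod_eq, decide_eq_true_eq]
    omega
  have hle (c : ℕ) : 2 ^ i * c ≤ a ↔ c ≤ a / 2 ^ i := by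
    rw [Nat.le_div_iff_mul_le hpos, mul_comm]
  rw [hbit]
  constructor
  · refine fun h => ⟨2 ^ i * (a / 2 ^ i), Nat.mul_div_le _ _, Dvd.intro _ rfl, ?_⟩
    rintro y hay hya hy
    obtain ⟨c, rfl⟩ := (pow_dvd_pow 2 i.le_succ).trans hy
    have hc : c = a / 2 ^ i := ((hle c).1 hya).antisymm (Nat.le_of_mul_le_mul_left hay hpos)
    exact h (hc ▸ (hdvd c).1 hy)
  · rintro ⟨x, hxa, ⟨c, rfl⟩, h⟩ heven
    exact h _ (Nat.mul_le_mul_left _ ((hle c).1 hxa)) (Nat.mul_div_le _ _) ((hdvd _).2 heven)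

/-! ### Binary addition -/

/-- The carry into place `t` in the binary addition `x + y`: some lower place generates a carry and
all places in between propagate it. -/
def Carry (x y t : ℕ) : Prop :=
  ∃ s < t, x.testBit s ∧ y.testBit s ∧ ∀ r, s < r → r < t → x.testBit r ∨ y.testBit r

theorem not_carry_zero (x y : ℕ) : ¬ Carry x y 0 := fun ⟨_, hs, _⟩ => Nat.not_lt_zero _ hs

theorem carry_succ (x y t : ℕ) : Carry x y (t + 1) ↔
    (x.testBit t ∧ y.testBit t) ∨ ((x.testBit t ∨ y.testBit t) ∧ Carry x y t) := by
  constructor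
  · rintro ⟨s, hst, hx, hy, hprop⟩
    rcases Nat.lt_succ_iff_lt_or_eq.1 hst with hlt | rfl
    · exact Or.inr ⟨hprop t hlt (by omega), s, hlt, hx, hy, fun r hsr hrt =>
        hprop r hsr (by omega)⟩
    · exact Or.inl ⟨hx, hy⟩
  · rintro (⟨hx, hy⟩ | ⟨ht, s, hst, hx, hy, hprop⟩)
    · exact ⟨t, by omega, hx, hy, fun r _ _ => by omega⟩
    · refine ⟨s, by omega, hx, hy, fun r hsr hrt => ?_⟩
      rcases Nat.lt_succ_iff_lt_or_eq.1 hrt with hlt | rfl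
      · exact hprop r hsr hlt
      · exact ht

theorem bitVecCarry_ofNat_iff {w t : ℕ} (ht : t ≤ w) (x y : ℕ) :
    BitVec.carry t (BitVec.ofNat w x) (BitVec.ofNat w y) false ↔ Carry x y t := by
  induction t with
  | zero => simp [not_carry_zero]
  | succ t ih =>
    have htw : t < w := ht
    rw [BitVec.carry_succ, carry_succ, ← ih htw.le, BitVec.getLsbD_ofNat, BitVec.getLsbD_ofNat]
    simp only [htw, decide_true, Bool.true_and, Bool.atLeastTwo, Bool.or_eq_true,
      Bool.and_eq_true]
    tauto

theorem testBit_add_iff (x y t : ℕ) :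
    (x + y).testBit t ↔ ((x.testBit t ↔ y.testBit t) ↔ Carry x y t) := by
  have hadd := BitVec.getLsbD_add t.lt_succ_self (BitVec.ofNat (t + 1) x) (BitVec.ofNat (t + 1) y)
  rw [← BitVec.ofNat_add] at hadd
  simp only [BitVec.getLsbD_ofNat, t.lt_succ_self, decide_true, Bool.true_and] at hadd
  rw [hadd, ← bitVecCarry_ofNat_iff t.le_succ]
  grind

/-! ### Reversal of binary words -/

/-- The reversal of `y` as a binary word of length `m`. -/
def reverseBits (m y : ℕ) : ℕ := Nat.ofBits fun i : Fin m => y.testBit (m - 1 - i)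

theorem testBit_reverseBits (m y i : ℕ) :
    (reverseBits m y).testBit i ↔ i < m ∧ y.testBit (m - 1 - i) := by
  simp only [reverseBits, Nat.testBit_ofBits]
  split_ifs with h <;> simp [h]

theorem reverseBits_lt (m y : ℕ) : reverseBits m y < 2 ^ m := Nat.ofBits_lt_two_pow _

theorem reverseBits_reverseBits {m y : ℕ} (hy : y < 2 ^ m) :
    reverseBits m (reverseBits m y) = y := by
  refine Nat.eq_of_testBit_eq fun t => Bool.eq_iff_iff.2 ?_
  rw [testBit_reverseBits, testBit_reverseBits]
  have hlt : y.testBit t → t < m := lt_two_pow_iff_forall_testBit.1 hy t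
  constructor
  · rintro ⟨ht, -, h⟩
    rwa [show m - 1 - (m - 1 - t) = t by omega] at h
  · intro h
    have ht := hlt h
    exact ⟨ht, by omega, by rwa [show m - 1 - (m - 1 - t) = t by omega]⟩

theorem reverseBits_two_pow_sub_two_pow {i m : ℕ} (h : i ≤ m) :
    reverseBits m (2 ^ m - 2 ^ i) = 2 ^ (m - i) - 1 := by
  refine Nat.eq_of_testBit_eq fun t => Bool.eq_iff_iff.2 ?_
  rw [testBit_reverseBits, testBit_two_pow_sub_two_pow h, Nat.testBit_two_pow_sub_one,
    decide_eq_true_eq]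
  omega

-- Divisibility by `2 ^ i` says that the reversed word has no bits beyond its first `m - i`.
theorem two_pow_dvd_iff_reverseBits_le {i m x : ℕ} (h : i ≤ m) :
    2 ^ i ∣ x ↔ reverseBits m x ≤ reverseBits m (2 ^ m - 2 ^ i) := by
  rw [reverseBits_two_pow_sub_two_pow h, Nat.le_sub_one_iff_lt (by positivity),
    two_pow_dvd_iff_forall_testBit, lt_two_pow_iff_forall_testBit]
  simp only [testBit_reverseBits]
  constructor
  · rintro hx t ⟨htm, ht⟩
    by_contra hle
    exact hx _ (by omega) ht
  · intro hx t hti ht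
    have := hx (m - 1 - t) ⟨by omega, by rwa [show m - 1 - (m - 1 - t) = t by omega]⟩
    omega

theorem testBit_reverseBits_iff_exists {m y t : ℕ} :
    (reverseBits m y).testBit t ↔ ∃ s, s + t + 1 = m ∧ y.testBit s := by
  rw [testBit_reverseBits]
  constructor
  · rintro ⟨ht, hy⟩
    exact ⟨m - 1 - t, by omega, hy⟩
  · rintro ⟨s, rfl, hy⟩
    exact ⟨by omega, by rwa [show s + t + 1 - 1 - t = s by omega]⟩

/-! ### The permutation -/

/-- The involution exchanging each `i < k` with `2 ^ k - 2 ^ i`, the binary word whose `1`s are at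
the places `i, ..., k - 1`, and fixing all other numbers. It leads from an exponent `i` to the
largest multiple of `2 ^ i` below `2 ^ k` in the order of the reversed words. -/
def exponentSwap (k u : ℕ) : ℕ :=
  if u < k then 2 ^ k - 2 ^ u
  else if ∃ i < k, u + 2 ^ i = 2 ^ k then Nat.log 2 (2 ^ k - u)
  else u

theorem le_of_add_two_pow_eq {k u w : ℕ} (hu : u < k) (h : w + 2 ^ u = 2 ^ k) : k ≤ w := by
  obtain ⟨j, rfl⟩ : ∃ j, k = j + 1 := ⟨k - 1, by omega⟩
  have hpow : 2 ^ u ≤ 2 ^ j := Nat.pow_le_pow_right two_pos (by omega)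
  have hj : j < 2 ^ j := Nat.lt_two_pow_self
  rw [pow_succ] at h
  omega

theorem exponentSwap_eq_iff {k u w : ℕ} : exponentSwap k u = w ↔
    (u < k ∧ w + 2 ^ u = 2 ^ k) ∨ (w < k ∧ u + 2 ^ w = 2 ^ k) ∨
      (u = w ∧ ¬ u < k ∧ ¬ ∃ i < k, u + 2 ^ i = 2 ^ k) := by
  unfold exponentSwap
  split_ifs with hu hex
  · have hpow : 2 ^ u < 2 ^ k := Nat.pow_lt_pow_right one_lt_two hu
    have hw : ¬ (w < k ∧ u + 2 ^ w = 2 ^ k) := fun h => (le_of_add_two_pow_eq h.1 h.2).not_gt hu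
    simp only [hu, hw, not_true_eq_false, false_and, and_false, or_false, true_and]
    omega
  · obtain ⟨i, hik, hi⟩ := hex
    have hlog : Nat.log 2 (2 ^ k - u) = i := by
      rw [← hi, Nat.add_sub_cancel_left, Nat.log_pow one_lt_two]
    have hunique : u + 2 ^ w = 2 ^ k ↔ i = w := by
      rw [← hi, Nat.add_left_cancel_iff, Nat.pow_right_inj (le_refl 2), eq_comm]
    have hex : ∃ i < k, u + 2 ^ i = 2 ^ k := ⟨i, hik, hi⟩
    simp only [hu, hex, hlog, hunique, not_true_eq_false, false_and, and_false, or_false,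
      false_or]
    exact ⟨fun h => ⟨h ▸ hik, h⟩, And.right⟩
  · have hw : ¬ (w < k ∧ u + 2 ^ w = 2 ^ k) := fun h => hex ⟨w, h⟩
    simp only [hu, hex, hw, not_false_eq_true, false_and, and_true, false_or]

theorem exponentSwap_exponentSwap (k u : ℕ) : exponentSwap k (exponentSwap k u) = u := by
  have h := exponentSwap_eq_iff.1 (rfl : exponentSwap k u = exponentSwap k u)
  rw [exponentSwap_eq_iff]
  rcases h with h | h | ⟨heq, h⟩
  · exact Or.inr (Or.inl h)
  · exact Or.inl h
  · exact Or.inr (Or.inr ⟨heq.symm, heq ▸ h⟩)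

theorem exponentSwap_lt {k u : ℕ} (hu : u < 2 ^ k) : exponentSwap k u < 2 ^ k := by
  rcases exponentSwap_eq_iff.1 (rfl : exponentSwap k u = exponentSwap k u) with h | h | h
  · have hpos : 0 < 2 ^ u := by positivity
    omega
  · exact h.1.trans Nat.lt_two_pow_self
  · exact h.1 ▸ hu

theorem exponentSwap_of_lt {k u : ℕ} (hu : u < k) : exponentSwap k u = 2 ^ k - 2 ^ u := if_pos hu

theorem lt_exponentSwap_iff {k u : ℕ} : u < exponentSwap k u ↔ u < k := by
  rcases exponentSwap_eq_iff.1 (rfl : exponentSwap k u = exponentSwap k u) with h | h | h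
  · have := le_of_add_two_pow_eq h.1 h.2
    omega
  · have := le_of_add_two_pow_eq h.1 h.2
    omega
  · omega

theorem two_pow_dvd_iff_exponentSwap {m i x : ℕ} (hx : x < 2 ^ m) : 2 ^ i ∣ x ↔ x = 0 ∨
    (i < exponentSwap m i ∧ reverseBits m x ≤ reverseBits m (exponentSwap m i)) := by
  rw [lt_exponentSwap_iff]
  rcases lt_or_ge i m with hi | hi
  · rw [exponentSwap_of_lt hi, ← two_pow_dvd_iff_reverseBits_le hi.le]
    exact ⟨fun h => Or.inr ⟨hi, h⟩, fun h => h.elim (fun h0 => h0 ▸ dvd_zero _) And.right⟩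
  · simp only [hi.not_gt, false_and, or_false]
    refine ⟨fun h => Nat.eq_zero_of_dvd_of_lt h ?_, fun h0 => h0 ▸ dvd_zero _⟩
    exact hx.trans_le (Nat.pow_le_pow_right two_pos hi)

/-- A bijection of `{0,...,4 * 2 ^ m - 1}` acting on the numbers `4 * y + c`, `c < 4`, through four
maps of `y`. With the order at hand, the classes `c = 0`, `c = 1` and `c = 2, 3` give access to
multiplication by `4`, the order of the reversed words and `exponentSwap`, respectively. -/
def baseMap (m x : ℕ) : ℕ :=
  match x % 4 with
  | 0 => x / 4
  | 1 => 2 ^ m + reverseBits m (x / 4)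
  | 2 => 2 * (2 ^ m + x / 4)
  | _ => 2 * (2 ^ m + exponentSwap m (x / 4)) + 1

section baseMap

variable (m y : ℕ)

theorem baseMap_four_mul : baseMap m (4 * y) = y := by
  simp [baseMap]

theorem baseMap_four_mul_add_one : baseMap m (4 * y + 1) = 2 ^ m + reverseBits m y := by
  simp [baseMap, Nat.add_mod, Nat.mul_add_div]

theorem baseMap_four_mul_add_two : baseMap m (4 * y + 2) = 2 * (2 ^ m + y) := by
  simp [baseMap, Nat.add_mod, Nat.mul_add_div]

theorem baseMap_four_mul_add_three :
    baseMap m (4 * y + 3) = 2 * (2 ^ m + exponentSwap m y) + 1 := by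
  simp [baseMap, Nat.add_mod, Nat.mul_add_div]

end baseMap

theorem exists_eq_four_mul_add (x : ℕ) :
    ∃ y, x = 4 * y ∨ x = 4 * y + 1 ∨ x = 4 * y + 2 ∨ x = 4 * y + 3 :=
  ⟨x / 4, by omega⟩

theorem baseMap_eq_iff {m x y : ℕ} : baseMap m x = y ↔ ∃ q,
    (x = 4 * q ∧ y = q) ∨ (x = 4 * q + 1 ∧ 2 ^ m + reverseBits m q = y) ∨
    (x = 4 * q + 2 ∧ 2 * (2 ^ m + q) = y) ∨
    (x = 4 * q + 3 ∧ 2 * (2 ^ m + exponentSwap m q) + 1 = y) := by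
  constructor
  · rintro rfl
    obtain ⟨q, hq⟩ := exists_eq_four_mul_add x
    refine ⟨q, ?_⟩
    rcases hq with rfl | rfl | rfl | rfl
    · exact Or.inl ⟨rfl, baseMap_four_mul m q⟩
    · exact Or.inr (Or.inl ⟨rfl, (baseMap_four_mul_add_one m q).symm⟩)
    · exact Or.inr (Or.inr (Or.inl ⟨rfl, (baseMap_four_mul_add_two m q).symm⟩))
    · exact Or.inr (Or.inr (Or.inr ⟨rfl, (baseMap_four_mul_add_three m q).symm⟩))
  · rintro ⟨q, ⟨rfl, rfl⟩ | ⟨rfl, rfl⟩ | ⟨rfl, rfl⟩ | ⟨rfl, rfl⟩⟩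
    exacts [baseMap_four_mul m _, baseMap_four_mul_add_one m q, baseMap_four_mul_add_two m q,
      baseMap_four_mul_add_three m q]

theorem baseMap_one (m : ℕ) : baseMap m 1 = 2 ^ m := by
  have hrev : reverseBits m 0 = 0 := Nat.zero_of_testBit_eq_false fun t => by
    simpa using testBit_reverseBits m 0 t
  simpa [hrev] using baseMap_four_mul_add_one m 0

theorem baseMap_lt {m x : ℕ} (hx : x < 4 * 2 ^ m) : baseMap m x < 4 * 2 ^ m := by
  obtain ⟨y, rfl | rfl | rfl | rfl⟩ := exists_eq_four_mul_add x
  · rw [baseMap_four_mul]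
    omega
  · have := reverseBits_lt m y
    rw [baseMap_four_mul_add_one]
    omega
  · rw [baseMap_four_mul_add_two]
    omega
  · have : exponentSwap m y < 2 ^ m := exponentSwap_lt (by omega)
    rw [baseMap_four_mul_add_three]
    omega

theorem injOn_baseMap (m : ℕ) : Set.InjOn (baseMap m) {x | x < 4 * 2 ^ m} := by
  intro x (hx : x < 4 * 2 ^ m) x' (hx' : x' < 4 * 2 ^ m) h
  obtain ⟨y, hy⟩ := exists_eq_four_mul_add x
  obtain ⟨y', hy'⟩ := exists_eq_four_mul_add x'
  have hlt := reverseBits_lt m y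
  have hlt' := reverseBits_lt m y'
  have hrev : reverseBits m y = reverseBits m y' → y = y' := fun h => by
    rw [← reverseBits_reverseBits (m := m) (y := y) (by omega), h,
      reverseBits_reverseBits (by omega)]
  have hswap : exponentSwap m y = exponentSwap m y' → y = y' := fun h => by
    rw [← exponentSwap_exponentSwap m y, h, exponentSwap_exponentSwap]
  rcases hy with rfl | rfl | rfl | rfl <;> rcases hy' with rfl | rfl | rfl | rfl <;>
    simp only [baseMap_four_mul, baseMap_four_mul_add_one, baseMap_four_mul_add_two,
      baseMap_four_mul_add_three] at h <;> omega

/-- The length of the words coded in `{0,...,n}`: for `4 ≤ n`, the `m` with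
`4 * 2 ^ m ≤ n < 8 * 2 ^ m`. -/
def codeLength (n : ℕ) : ℕ := Nat.log 2 n - 2

theorem four_mul_two_pow (m : ℕ) : 4 * 2 ^ m = 2 ^ (m + 2) := by
  rw [pow_add, mul_comm]
  rfl

theorem two_pow_codeLength_add_two {n : ℕ} (hn : 4 ≤ n) :
    2 ^ (codeLength n + 2) = 2 ^ Nat.log 2 n := by
  have : 2 ≤ Nat.log 2 n := Nat.le_log_of_pow_le one_lt_two hn
  rw [codeLength, Nat.sub_add_cancel this]

theorem four_mul_two_pow_codeLength_le {n : ℕ} (hn : 4 ≤ n) : 4 * 2 ^ codeLength n ≤ n := by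
  rw [four_mul_two_pow, two_pow_codeLength_add_two hn]
  exact Nat.pow_log_le_self 2 (by omega)

theorem lt_eight_mul_two_pow_codeLength {n : ℕ} (hn : 4 ≤ n) : n < 8 * 2 ^ codeLength n := by
  have hlt : n < 2 ^ (Nat.log 2 n + 1) := Nat.lt_pow_succ_log_self one_lt_two n
  rw [pow_succ, ← two_pow_codeLength_add_two hn, pow_add] at hlt
  omega

theorem codeLength_le {n : ℕ} (hn : 4 ≤ n) : codeLength n ≤ n := by
  have := four_mul_two_pow_codeLength_le hn
  exact le_of_two_pow_le (by omega)

theorem eq_codeLength_iff {n k : ℕ} (hn : 4 ≤ n) :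
    k = codeLength n ↔ 2 ^ (k + 2) ≤ n ∧ ∀ l, 2 ^ l ≤ n → l ≤ k + 2 := by
  have hlog : 2 ≤ Nat.log 2 n := Nat.le_log_of_pow_le one_lt_two hn
  have hk : k = codeLength n ↔ k + 2 = Nat.log 2 n := by
    unfold codeLength
    omega
  simp only [hk, ← Nat.le_log_iff_pow_le one_lt_two (by omega : n ≠ 0)]
  exact ⟨fun h => ⟨h.le, fun l hl => hl.trans h.ge⟩, fun h => h.1.antisymm (h.2 _ le_rfl)⟩

/-- The permutation of `{0,...,n}` as a map on `ℕ`. For `4 ≤ n` and `P = 4 * 2 ^ codeLength n`, it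
is `baseMap` on `{0,...,P - 1}` with the numbers `P + r ≤ n` inserted into its cycles after `r`. -/
def builtinMap (n x : ℕ) : ℕ :=
  if n < 4 then x
  else if x + 4 * 2 ^ codeLength n ≤ n then x + 4 * 2 ^ codeLength n
  else if x < 4 * 2 ^ codeLength n then baseMap (codeLength n) x
  else baseMap (codeLength n) (x - 4 * 2 ^ codeLength n)

theorem builtinMap_of_lt_four {n : ℕ} (hn : n < 4) (x : ℕ) : builtinMap n x = x := if_pos hn

theorem builtinMap_eq_iff {n x y : ℕ} (hn : 4 ≤ n) (hy : y ≤ n) : builtinMap n x = y ↔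
    x + 4 * 2 ^ codeLength n = y ∨ (¬ x + 4 * 2 ^ codeLength n ≤ n ∧
      ((x < 4 * 2 ^ codeLength n ∧ baseMap (codeLength n) x = y) ∨
        ∃ r, r + 4 * 2 ^ codeLength n = x ∧ baseMap (codeLength n) r = y)) := by
  unfold builtinMap
  rw [if_neg hn.not_gt]
  split_ifs with hshift hbase
  · simp only [hshift, not_true_eq_false, false_and, or_false]
  · have hne : x + 4 * 2 ^ codeLength n ≠ y := by omega
    have hr (r : ℕ) : r + 4 * 2 ^ codeLength n ≠ x := by omega
    simp only [hne, hshift, hbase, hr, not_false_eq_true, true_and, false_and, exists_false,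
      or_false, false_or]
  · have hne : x + 4 * 2 ^ codeLength n ≠ y := by omega
    have hr (r : ℕ) : r + 4 * 2 ^ codeLength n = x ↔ r = x - 4 * 2 ^ codeLength n := by omega
    simp only [hne, hshift, hbase, hr, not_false_eq_true, true_and, false_and, exists_eq_left,
      false_or]

theorem builtinMap_le {n x : ℕ} (hx : x ≤ n) : builtinMap n x ≤ n := by
  unfold builtinMap
  split_ifs with hn hshift hbase
  · exact hx
  · exact hshift
  · have := four_mul_two_pow_codeLength_le (n := n) (by omega)
    exact (baseMap_lt hbase).le.trans this
  · have := four_mul_two_pow_codeLength_le (n := n) (by omega)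
    have := lt_eight_mul_two_pow_codeLength (n := n) (by omega)
    exact (baseMap_lt (by omega)).le.trans ‹4 * 2 ^ codeLength n ≤ n›

theorem builtinMap_lt_or_eq_add {n x : ℕ} (hn : 4 ≤ n) (hx : x ≤ n) :
    builtinMap n x < 4 * 2 ^ codeLength n ∨ builtinMap n x = x + 4 * 2 ^ codeLength n := by
  have hlt := lt_eight_mul_two_pow_codeLength hn
  unfold builtinMap
  split_ifs
  · omega
  · exact Or.inr rfl
  · exact Or.inl (baseMap_lt ‹_›)
  · exact Or.inl (baseMap_lt (by omega))

theorem injOn_builtinMap (n : ℕ) : Set.InjOn (builtinMap n) {x | x ≤ n} := by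
  intro x (hx : x ≤ n) x' (hx' : x' ≤ n) h
  by_cases hn : n < 4
  · simpa only [builtinMap, if_pos hn] using h
  have hlt := lt_eight_mul_two_pow_codeLength (n := n) (by omega)
  have hbase (r : ℕ) : r < 4 * 2 ^ codeLength n → baseMap (codeLength n) r < 4 * 2 ^ codeLength n :=
    baseMap_lt
  have hinj (r r' : ℕ) (hr : r < 4 * 2 ^ codeLength n) (hr' : r' < 4 * 2 ^ codeLength n)
      (h : baseMap (codeLength n) r = baseMap (codeLength n) r') : r = r' :=
    injOn_baseMap _ hr hr' h
  simp only [builtinMap, if_neg hn] at h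
  split_ifs at h <;> grind

-- A number `x` with `x + P ≤ n`, where `P = 4 * 2 ^ codeLength n`, reaches its image under
-- `baseMap` after one detour through `x + P`.
theorem baseMap_eq_iff_builtinMap {n x y : ℕ} (hn : 4 ≤ n) (hx : x < 4 * 2 ^ codeLength n)
    (hy : y < 4 * 2 ^ codeLength n) : baseMap (codeLength n) x = y ↔
      builtinMap n x = y ∨ ∃ z ≤ n, z = x + 4 * 2 ^ codeLength n ∧ builtinMap n z = y := by
  have hP := four_mul_two_pow_codeLength_le hn
  have hlt := lt_eight_mul_two_pow_codeLength hn
  rw [builtinMap_eq_iff hn (by omega)]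
  constructor
  · intro h
    by_cases hz : x + 4 * 2 ^ codeLength n ≤ n
    · exact Or.inr ⟨_, hz, rfl, (builtinMap_eq_iff hn (by omega)).2
        (Or.inr ⟨by omega, Or.inr ⟨x, rfl, h⟩⟩)⟩
    · exact Or.inl (Or.inr ⟨hz, Or.inl ⟨hx, h⟩⟩)
  · rintro ((hxy | ⟨-, ⟨-, h⟩ | ⟨r, hr, -⟩⟩) | ⟨z, hz, rfl, h⟩)
    · omega
    · exact h
    · omega
    · rcases (builtinMap_eq_iff hn (by omega)).1 h with hzy | ⟨-, ⟨hlt, -⟩ | ⟨r, hr, h⟩⟩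
      · omega
      · omega
      · rwa [Nat.add_right_cancel hr] at h

/-- The built-in permutation. -/
noncomputable def builtinPerm (n : ℕ) : Equiv.Perm (Fin (n + 1)) :=
  Equiv.ofBijective
    (fun x => ⟨builtinMap n x, Nat.lt_succ_of_le (builtinMap_le (Nat.lt_succ_iff.1 x.2))⟩)
    (Finite.injective_iff_bijective.1 fun x x' h => Fin.ext <|
      injOn_builtinMap n (Nat.lt_succ_iff.1 x.2) (Nat.lt_succ_iff.1 x'.2) (Fin.mk.inj h))

theorem builtinPerm_apply_eq_iff {n : ℕ} {a b : Fin (n + 1)} :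
    builtinPerm n a = b ↔ builtinMap n a = b :=
  Fin.ext_iff

/-! ### The order from `Bit` -/

theorem lt_iff_exists_testBit {i j : ℕ} :
    i < j ↔ ∃ d, j.testBit d ∧ ¬ i.testBit d ∧ ∀ e, d < e → (i.testBit e ↔ j.testBit e) := by
  constructor
  · intro hij
    obtain ⟨d, hd, hmax⟩ := Nat.exists_most_significant_bit (Nat.xor_ne_zero_iff.2 hij.ne)
    have hagree (e : ℕ) (hde : d < e) : i.testBit e = j.testBit e := by
      simpa only [Nat.testBit_xor, bne_eq_false_iff_eq] using hmax e hde
    have hdiff : i.testBit d ≠ j.testBit d := by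
      simpa only [Nat.testBit_xor, bne_iff_ne] using hd
    have hj : j.testBit d := by
      by_contra hj
      rw [Bool.not_eq_true] at hj
      exact hij.not_gt <| Nat.lt_of_testBit d hj (by simpa [hj] using hdiff)
        fun e hde => (hagree e hde).symm
    exact ⟨d, hj, fun hi => hdiff (hi.trans hj.symm), fun e hde => by rw [hagree e hde]⟩
  · rintro ⟨d, hj, hi, hagree⟩
    exact Nat.lt_of_testBit d (by simpa using hi) hj fun e hde => Bool.eq_iff_iff.2 (hagree e hde)

/-- Comparison of `i` and `j` as binary words within `{0,...,n}`, where `r` is taken for the order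
of the bit positions. -/
def WordLT (r : ℕ → ℕ → Prop) (n i j : ℕ) : Prop :=
  ∃ d ≤ n, j.testBit d ∧ ¬ i.testBit d ∧ ∀ e ≤ n, r d e → (i.testBit e ↔ j.testBit e)

/-- The relation coded by `W`, read as a set of numbers which are themselves read as sets: some
member of `W` contains `i` and does not contain `j`. -/
def CodedLT (n W i j : ℕ) : Prop :=
  ∃ w ≤ n, W.testBit w ∧ w.testBit i ∧ ¬ w.testBit j

/-- The relation coded by `W` satisfies the recursive characterization of the order in terms of
binary words, on the numbers `i` with `2 ^ 2 ^ i ≤ n`. -/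
def CodesOrder (n W : ℕ) : Prop :=
  ∀ i ≤ n, ∀ j ≤ n, 2 ^ 2 ^ i ≤ n → 2 ^ 2 ^ j ≤ n →
    (CodedLT n W i j ↔ WordLT (CodedLT n W) n i j)

theorem wordLT_iff_lt {r : ℕ → ℕ → Prop} {n i j : ℕ} (hi : i ≤ n) (hj : j ≤ n)
    (h : ∀ d e, (i.testBit d ∨ j.testBit d) → (i.testBit e ∨ j.testBit e) → (r d e ↔ d < e)) :
    WordLT r n i j ↔ i < j := by
  have hle (e : ℕ) : i.testBit e ∨ j.testBit e → e ≤ n := by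
    rintro (he | he)
    · exact (lt_of_testBit he).le.trans hi
    · exact (lt_of_testBit he).le.trans hj
  rw [lt_iff_exists_testBit]
  constructor
  · rintro ⟨d, -, hjd, hid, hagree⟩
    refine ⟨d, hjd, hid, fun e hde => ?_⟩
    by_cases he : i.testBit e ∨ j.testBit e
    · exact hagree e (hle e he) ((h d e (Or.inr hjd) he).2 hde)
    · tauto
  · rintro ⟨d, hjd, hid, hagree⟩
    refine ⟨d, hle d (Or.inr hjd), hjd, hid, fun e _ hde => ?_⟩
    by_cases he : i.testBit e ∨ j.testBit e
    · exact hagree e ((h d e (Or.inr hjd) he).1 hde)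
    · tauto

theorem two_pow_two_pow_le_of_testBit {n i d : ℕ} (hi : 2 ^ i ≤ n) (hd : i.testBit d) :
    2 ^ 2 ^ d ≤ n :=
  (Nat.pow_le_pow_right two_pos (Nat.ge_two_pow_of_testBit hd)).trans hi

theorem CodesOrder.codedLT_iff_lt {n W : ℕ} (hW : CodesOrder n W) {i j : ℕ}
    (hi : 2 ^ 2 ^ i ≤ n) (hj : 2 ^ 2 ^ j ≤ n) : CodedLT n W i j ↔ i < j := by
  obtain ⟨K, hiK, hjK⟩ : ∃ K, i < K ∧ j < K := ⟨i + j + 1, by omega, by omega⟩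
  induction K generalizing i j with
  | zero => omega
  | succ K ih =>
    have hi' := le_of_two_pow_le hi
    have hj' := le_of_two_pow_le hj
    rw [hW i (le_of_two_pow_le hi') j (le_of_two_pow_le hj') hi hj]
    have hbit (e : ℕ) (he : i.testBit e ∨ j.testBit e) : 2 ^ 2 ^ e ≤ n ∧ e < K := by
      rcases he with he | he
      · exact ⟨two_pow_two_pow_le_of_testBit hi' he, (lt_of_testBit he).trans_le (by omega)⟩
      · exact ⟨two_pow_two_pow_le_of_testBit hj' he, (lt_of_testBit he).trans_le (by omega)⟩
    exact wordLT_iff_lt (le_of_two_pow_le hi') (le_of_two_pow_le hj') fun d e hd he =>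
      ih (hbit d hd).1 (hbit e he).1 (hbit d hd).2 (hbit e he).2

open Classical in
/-- The set of the (codes `2 ^ s - 1` of the) initial segments `{0,...,s - 1}` below `log n`, the
intended code of the order. -/
noncomputable def orderCode (n : ℕ) : ℕ :=
  Nat.ofBits fun w : Fin (Nat.log 2 n) => decide (∃ s, (w : ℕ) = 2 ^ s - 1)

theorem testBit_orderCode {n w : ℕ} :
    (orderCode n).testBit w ↔ w < Nat.log 2 n ∧ ∃ s, w = 2 ^ s - 1 := by
  simp only [orderCode, Nat.testBit_ofBits]
  split_ifs with h <;> simp [h]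

theorem codedLT_orderCode_iff_lt {n i j : ℕ} (hj : 2 ^ 2 ^ j ≤ n) :
    CodedLT n (orderCode n) i j ↔ i < j := by
  constructor
  · rintro ⟨w, -, hw, hwi, hwj⟩
    obtain ⟨-, s, rfl⟩ := testBit_orderCode.1 hw
    simp only [Nat.testBit_two_pow_sub_one, decide_eq_true_eq] at hwi hwj
    omega
  · intro hij
    have hlog : 2 ^ j ≤ Nat.log 2 n := Nat.le_log_of_pow_le one_lt_two hj
    have hle : 2 ^ j ≤ n := le_of_two_pow_le hj
    have hpos : 0 < 2 ^ j := by positivity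
    refine ⟨2 ^ j - 1, by omega, testBit_orderCode.2 ⟨by omega, j, rfl⟩, ?_, ?_⟩
    · simpa [Nat.testBit_two_pow_sub_one] using hij
    · simp [Nat.testBit_two_pow_sub_one]

theorem codesOrder_orderCode (n : ℕ) : CodesOrder n (orderCode n) := by
  intro i hin j hjn hi hj
  rw [codedLT_orderCode_iff_lt hj, wordLT_iff_lt hin hjn]
  rintro d e - (he | he)
  · exact codedLT_orderCode_iff_lt
      (two_pow_two_pow_le_of_testBit (le_of_two_pow_le hi) he)
  · exact codedLT_orderCode_iff_lt
      (two_pow_two_pow_le_of_testBit (le_of_two_pow_le hj) he)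

theorem orderCode_le {n : ℕ} (hn : n ≠ 0) : orderCode n ≤ n :=
  (Nat.ofBits_lt_two_pow _).le.trans (Nat.pow_log_le_self 2 hn)

theorem exists_codesOrder_and_codedLT_iff {n i j : ℕ} (hi : 2 ^ 2 ^ i ≤ n) (hj : 2 ^ 2 ^ j ≤ n) :
    (∃ W ≤ n, CodesOrder n W ∧ CodedLT n W i j) ↔ i < j := by
  have hn : n ≠ 0 := ((Nat.two_pow_pos _).trans_le hi).ne'
  constructor
  · rintro ⟨W, -, hW, hij⟩
    exact (hW.codedLT_iff_lt hi hj).1 hij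
  · exact fun hij => ⟨orderCode n, orderCode_le hn, codesOrder_orderCode n,
      (codedLT_orderCode_iff_lt hj).2 hij⟩

section Bit

variable {I : Set ℕ}

theorem uniformlyDefinable₂_bit_testBit :
    UniformlyDefinable₂ bitStruct I fun _ x i => x.testBit i := by
  intro α a b
  let r : LBit.Relations 2 := BitRel.bit
  refine ⟨r.formula₂ (Term.var a) (Term.var b), fun n _ v => ?_⟩
  let _ := bitStruct n
  rw [Formula.realize_rel₂]
  rfl

theorem uniformlyDefinable₂_bit_wordLT {r : ℕ → ℕ → ℕ → Prop}
    (hr : UniformlyDefinable₂ bitStruct I r) :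
    UniformlyDefinable₂ bitStruct I fun n i j => WordLT (r n) n i j := by
  have hbit := uniformlyDefinable₂_bit_testBit (I := I)
  intro α a b
  unfold WordLT
  apply_rules [UniformlyDefinable.ex, UniformlyDefinable.all, UniformlyDefinable.and,
    UniformlyDefinable.not, UniformlyDefinable.imp, UniformlyDefinable.iff]

theorem uniformlyDefinable₁_bit_two_pow_le :
    UniformlyDefinable₁ bitStruct I fun n i => 2 ^ i ≤ n := by
  have hbit := uniformlyDefinable₂_bit_testBit (I := I)
  have h : UniformlyDefinable₁ bitStruct I fun n i => ∃ a ≤ n, a.testBit i := fun _ _ =>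
    UniformlyDefinable.ex (hbit _ _)
  refine h.congr fun n _ i _ => ⟨?_, fun hi => ⟨2 ^ i, hi, Nat.testBit_two_pow_self⟩⟩
  rintro ⟨a, ha, hai⟩
  exact (Nat.ge_two_pow_of_testBit hai).trans ha

theorem uniformlyDefinable₁_bit_two_pow_two_pow_le :
    UniformlyDefinable₁ bitStruct I fun n i => 2 ^ 2 ^ i ≤ n := by
  have hbit := uniformlyDefinable₂_bit_testBit (I := I)
  have hpow := uniformlyDefinable₁_bit_two_pow_le (I := I)
  have h : UniformlyDefinable₁ bitStruct I fun n t => ∃ i ≤ n, 2 ^ i ≤ n ∧ i.testBit t := fun _ _ =>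
    UniformlyDefinable.ex ((hpow _).and (hbit _ _))
  refine h.congr fun n _ t _ => ⟨fun ⟨i, _, hi, ht⟩ => two_pow_two_pow_le_of_testBit hi ht, ?_⟩
  exact fun ht => ⟨2 ^ t, le_of_two_pow_le ht, ht, Nat.testBit_two_pow_self⟩

theorem uniformlyDefinable₂_bit_exists_codesOrder : UniformlyDefinable₂ bitStruct I
    fun n i j => ∃ W ≤ n, CodesOrder n W ∧ CodedLT n W i j := by
  have hbit := uniformlyDefinable₂_bit_testBit (I := I)
  have hpow := uniformlyDefinable₁_bit_two_pow_two_pow_le (I := I)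
  have hcoded : UniformlyDefinable₃ bitStruct I CodedLT := by
    intro α a b c
    unfold CodedLT
    apply_rules [UniformlyDefinable.ex, UniformlyDefinable.and, UniformlyDefinable.not]
  have hcodes : UniformlyDefinable₁ bitStruct I CodesOrder := by
    intro α a
    unfold CodesOrder WordLT
    apply_rules [UniformlyDefinable.ex, UniformlyDefinable.all, UniformlyDefinable.and,
      UniformlyDefinable.not, UniformlyDefinable.imp, UniformlyDefinable.iff]
  intro α a b
  apply_rules [UniformlyDefinable.ex, UniformlyDefinable.and]

-- Two rounds of `WordLT` lift the order from the `t` with `2 ^ 2 ^ t ≤ n` to the `i` with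
-- `2 ^ i ≤ n` and from there to all numbers up to `n`.
theorem uniformlyDefinable₂_bit_lt : UniformlyDefinable₂ bitStruct I fun _ x y => x < y := by
  refine (uniformlyDefinable₂_bit_wordLT (uniformlyDefinable₂_bit_wordLT
    uniformlyDefinable₂_bit_exists_codesOrder)).congr fun n _ x hx y hy => ?_
  have hpow (e : ℕ) : x.testBit e ∨ y.testBit e → 2 ^ e ≤ n := by
    rintro (he | he)
    · exact (Nat.ge_two_pow_of_testBit he).trans hx
    · exact (Nat.ge_two_pow_of_testBit he).trans hy
  refine wordLT_iff_lt hx hy fun d e hd he => ?_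
  have hpow₂ (t : ℕ) : d.testBit t ∨ e.testBit t → 2 ^ 2 ^ t ≤ n := by
    rintro (ht | ht)
    · exact two_pow_two_pow_le_of_testBit (hpow d hd) ht
    · exact two_pow_two_pow_le_of_testBit (hpow e he) ht
  exact wordLT_iff_lt (le_of_two_pow_le (hpow d hd)) (le_of_two_pow_le (hpow e he))
    fun s t hs ht => exists_codesOrder_and_codedLT_iff (hpow₂ s hs) (hpow₂ t ht)

/-! ### The permutation from `Bit` -/

theorem uniformlyDefinable₃_bit_carry : UniformlyDefinable₃ bitStruct I fun _ x y t =>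
    Carry x y t := by
  have hbit := uniformlyDefinable₂_bit_testBit (I := I)
  have hlt := uniformlyDefinable₂_bit_lt (I := I)
  have h : UniformlyDefinable₃ bitStruct I fun n x y t => ∃ s ≤ n, s < t ∧ x.testBit s ∧
      y.testBit s ∧ ∀ r ≤ n, s < r → r < t → x.testBit r ∨ y.testBit r := by
    intro α a b c
    apply_rules [UniformlyDefinable.ex, UniformlyDefinable.all, UniformlyDefinable.and,
      UniformlyDefinable.or, UniformlyDefinable.imp]
  refine h.congr fun n _ x _ y _ t ht => ⟨?_, ?_⟩
  · rintro ⟨s, -, hst, hx, hy, hprop⟩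
    exact ⟨s, hst, hx, hy, fun r hsr hrt => hprop r (by omega) hsr hrt⟩
  · rintro ⟨s, hst, hx, hy, hprop⟩
    exact ⟨s, by omega, hst, hx, hy, fun r _ => hprop r⟩

theorem uniformlyDefinable₃_bit_add :
    UniformlyDefinable₃ bitStruct I fun _ x y z => x + y = z := by
  have hbit := uniformlyDefinable₂_bit_testBit (I := I)
  have hcarry := uniformlyDefinable₃_bit_carry (I := I)
  have h : UniformlyDefinable₃ bitStruct I fun n x y z => ∀ t ≤ n,
      (((x.testBit t ↔ y.testBit t) ↔ Carry x y t) ↔ z.testBit t) := by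
    intro α a b c
    apply_rules [UniformlyDefinable.all, UniformlyDefinable.iff]
  refine h.congr fun n _ x _ y _ z _ => ?_
  simp only [← testBit_add_iff]
  exact (eq_iff_forall_testBit_le (lt_two_pow_succ_of_le_two_mul (by omega))
    (lt_two_pow_succ_of_le_two_mul (by omega))).symm

theorem uniformlyDefinable₂_bit_two_pow :
    UniformlyDefinable₂ bitStruct I fun _ k x => 2 ^ k = x := by
  have hbit := uniformlyDefinable₂_bit_testBit (I := I)
  have heq := uniformlyDefinable₂_eq (S := bitStruct) (I := I)
  have h : UniformlyDefinable₂ bitStruct I fun n k x => ∀ t ≤ n, (k = t ↔ x.testBit t) := by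
    intro α a b
    apply_rules [UniformlyDefinable.all, UniformlyDefinable.iff]
  refine h.congr fun n _ k hk x hx => ?_
  rw [eq_iff_forall_testBit_le (Nat.pow_lt_pow_right one_lt_two (Nat.lt_succ_of_le hk))
    (lt_two_pow_succ_of_le_two_mul (by omega : x ≤ 2 * n))]
  simp only [Nat.testBit_two_pow, decide_eq_true_eq]

theorem uniformlyDefinable₂_bit_four_mul_add (c : ℕ) :
    UniformlyDefinable₂ bitStruct I fun _ y x => x = 4 * y + c := by
  have hadd := uniformlyDefinable₃_bit_add (I := I)
  have hconst := uniformlyDefinable₂_eq_add_const (uniformlyDefinable₂_bit_lt (I := I)) c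
  have h : UniformlyDefinable₂ bitStruct I fun n y x =>
      ∃ d ≤ n, y + y = d ∧ ∃ e ≤ n, d + d = e ∧ x = e + c := by
    intro α a b
    apply_rules [UniformlyDefinable.ex, UniformlyDefinable.and]
  refine h.congr fun n _ y _ x _ => ⟨?_, fun hx => ?_⟩
  · rintro ⟨d, -, hd, e, -, he, hx⟩
    omega
  · exact ⟨y + y, by omega, rfl, _, by omega, rfl, by omega⟩

theorem uniformlyDefinable₁_bit_codeLength :
    UniformlyDefinable₁ bitStruct {n | 4 ≤ n} fun n x => x = codeLength n := by
  have hlt := uniformlyDefinable₂_bit_lt (I := {n | 4 ≤ n})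
  have hle := uniformlyDefinable₂_le hlt
  have hadd := uniformlyDefinable₂_eq_add_const hlt 2
  have hpow := uniformlyDefinable₁_bit_two_pow_le (I := {n | 4 ≤ n})
  have h : UniformlyDefinable₁ bitStruct {n | 4 ≤ n} fun n k =>
      ∃ l ≤ n, l = k + 2 ∧ 2 ^ l ≤ n ∧ ∀ j ≤ n, 2 ^ j ≤ n → j ≤ l := by
    intro α a
    apply_rules [UniformlyDefinable.ex, UniformlyDefinable.all, UniformlyDefinable.and,
      UniformlyDefinable.imp]
  refine h.congr fun n hn k _ => ?_
  rw [eq_codeLength_iff hn]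
  constructor
  · rintro ⟨l, -, rfl, hl, hmax⟩
    exact ⟨hl, fun j hj => hmax j (le_of_two_pow_le hj) hj⟩
  · rintro ⟨hl, hmax⟩
    exact ⟨k + 2, le_of_two_pow_le hl, rfl, hl, fun j _ => hmax j⟩

theorem uniformlyDefinable₁_bit_two_pow_codeLength :
    UniformlyDefinable₁ bitStruct {n | 4 ≤ n} fun n x => x = 2 ^ codeLength n := by
  have hlen := uniformlyDefinable₁_bit_codeLength
  have hpow := uniformlyDefinable₂_bit_two_pow (I := {n | 4 ≤ n})
  have h : UniformlyDefinable₁ bitStruct {n | 4 ≤ n} fun n x =>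
      ∃ k ≤ n, k = codeLength n ∧ 2 ^ k = x := by
    intro α a
    apply_rules [UniformlyDefinable.ex, UniformlyDefinable.and]
  refine h.congr fun n hn x _ => ⟨?_, fun hx => ⟨_, codeLength_le hn, rfl, hx.symm⟩⟩
  rintro ⟨k, -, rfl, hx⟩
  exact hx.symm

theorem uniformlyDefinable₂_bit_reverseBits : UniformlyDefinable₂ bitStruct {n | 4 ≤ n}
    fun n x y => reverseBits (codeLength n) x = y := by
  have hbit := uniformlyDefinable₂_bit_testBit (I := {n | 4 ≤ n})
  have hadd := uniformlyDefinable₃_bit_add (I := {n | 4 ≤ n})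
  have hsucc := uniformlyDefinable₂_eq_succ (uniformlyDefinable₂_bit_lt (I := {n | 4 ≤ n}))
  have hlen := uniformlyDefinable₁_bit_codeLength
  have h : UniformlyDefinable₂ bitStruct {n | 4 ≤ n} fun n x y => ∀ t ≤ n,
      ((∃ s ≤ n, (∃ u ≤ n, s + t = u ∧ ∃ k ≤ n, k = u + 1 ∧ k = codeLength n) ∧ x.testBit s) ↔
        y.testBit t) := by
    intro α a b
    apply_rules [UniformlyDefinable.ex, UniformlyDefinable.all, UniformlyDefinable.and,
      UniformlyDefinable.iff]
  refine h.congr fun n hn x _ y _ => ?_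
  have hle := four_mul_two_pow_codeLength_le hn
  have hlt := reverseBits_lt (codeLength n) x
  have hlen := codeLength_le hn
  rw [eq_iff_forall_testBit_le (n := n) (lt_two_pow_succ_of_le_two_mul (by omega))
    (lt_two_pow_succ_of_le_two_mul (by omega))]
  refine forall₂_congr fun t _ => iff_congr ?_ Iff.rfl
  rw [testBit_reverseBits_iff_exists]
  constructor
  · rintro ⟨s, -, ⟨u, -, hu, k, -, hk, hkn⟩, hx⟩
    exact ⟨s, by omega, hx⟩
  · rintro ⟨s, hs, hx⟩
    exact ⟨s, by omega, ⟨_, by omega, rfl, _, by omega, rfl, by omega⟩, hx⟩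

theorem uniformlyDefinable₂_bit_add_two_pow : UniformlyDefinable₂ bitStruct {n | 4 ≤ n}
    fun n i w => i < codeLength n ∧ w + 2 ^ i = 2 ^ codeLength n := by
  have hlt := uniformlyDefinable₂_bit_lt (I := {n | 4 ≤ n})
  have hadd := uniformlyDefinable₃_bit_add (I := {n | 4 ≤ n})
  have hpow := uniformlyDefinable₂_bit_two_pow (I := {n | 4 ≤ n})
  have hlen := uniformlyDefinable₁_bit_codeLength
  have htwo := uniformlyDefinable₁_bit_two_pow_codeLength
  have h : UniformlyDefinable₂ bitStruct {n | 4 ≤ n} fun n i w =>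
      (∃ k ≤ n, k = codeLength n ∧ i < k) ∧
        ∃ p ≤ n, 2 ^ i = p ∧ ∃ T ≤ n, T = 2 ^ codeLength n ∧ w + p = T := by
    intro α a b
    apply_rules [UniformlyDefinable.ex, UniformlyDefinable.and]
  refine h.congr fun n hn i _ w _ => ?_
  have hT := four_mul_two_pow_codeLength_le hn
  constructor
  · rintro ⟨⟨_, -, rfl, hi⟩, _, -, rfl, _, -, rfl, hw⟩
    exact ⟨hi, hw⟩
  · rintro ⟨hi, hw⟩
    exact ⟨⟨_, codeLength_le hn, rfl, hi⟩, _, by omega, rfl, _, by omega, rfl, hw⟩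

theorem uniformlyDefinable₂_bit_exponentSwap : UniformlyDefinable₂ bitStruct {n | 4 ≤ n}
    fun n u w => exponentSwap (codeLength n) u = w := by
  have hlt := uniformlyDefinable₂_bit_lt (I := {n | 4 ≤ n})
  have heq := uniformlyDefinable₂_eq (S := bitStruct) (I := {n | 4 ≤ n})
  have hlen := uniformlyDefinable₁_bit_codeLength
  have hpair := uniformlyDefinable₂_bit_add_two_pow
  have hless : UniformlyDefinable₁ bitStruct {n | 4 ≤ n} fun n u =>
      ∃ k ≤ n, k = codeLength n ∧ u < k := by
    intro α a
    apply_rules [UniformlyDefinable.ex, UniformlyDefinable.and]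
  have h : UniformlyDefinable₂ bitStruct {n | 4 ≤ n} fun n u w =>
      (u < codeLength n ∧ w + 2 ^ u = 2 ^ codeLength n) ∨
      (w < codeLength n ∧ u + 2 ^ w = 2 ^ codeLength n) ∨
      (u = w ∧ ¬ (∃ k ≤ n, k = codeLength n ∧ u < k) ∧
        ¬ ∃ i ≤ n, i < codeLength n ∧ u + 2 ^ i = 2 ^ codeLength n) := fun _ _ _ =>
    (hpair _ _).or <| (hpair _ _).or <| (heq _ _).and <| (hless _).not.and
      (UniformlyDefinable.ex (hpair _ _)).not
  refine h.congr fun n hn u _ w _ => ?_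
  have hle := codeLength_le hn
  rw [exponentSwap_eq_iff]
  refine or_congr Iff.rfl (or_congr Iff.rfl (and_congr_right fun _ => and_congr ?_ ?_))
  · exact not_congr ⟨fun ⟨_, _, hk, hu⟩ => hk ▸ hu, fun hu => ⟨_, hle, rfl, hu⟩⟩
  · exact not_congr ⟨fun ⟨i, _, hi⟩ => ⟨i, hi⟩, fun ⟨i, hi⟩ => ⟨i, hi.1.le.trans hle, hi⟩⟩

theorem uniformlyDefinable₂_bit_baseMap : UniformlyDefinable₂ bitStruct {n | 4 ≤ n}
    fun n x y => baseMap (codeLength n) x = y := by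
  have heq := uniformlyDefinable₂_eq (S := bitStruct) (I := {n | 4 ≤ n})
  have hadd := uniformlyDefinable₃_bit_add (I := {n | 4 ≤ n})
  have hsucc := uniformlyDefinable₂_eq_succ (uniformlyDefinable₂_bit_lt (I := {n | 4 ≤ n}))
  have hzero := uniformlyDefinable₂_bit_four_mul_add (I := {n | 4 ≤ n}) 0
  have hone := uniformlyDefinable₂_bit_four_mul_add (I := {n | 4 ≤ n}) 1
  have htwo := uniformlyDefinable₂_bit_four_mul_add (I := {n | 4 ≤ n}) 2
  have hthree := uniformlyDefinable₂_bit_four_mul_add (I := {n | 4 ≤ n}) 3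
  have hT := uniformlyDefinable₁_bit_two_pow_codeLength
  have hrev := uniformlyDefinable₂_bit_reverseBits
  have hswap := uniformlyDefinable₂_bit_exponentSwap
  have h : UniformlyDefinable₂ bitStruct {n | 4 ≤ n} fun n x y =>
      ∃ T ≤ n, T = 2 ^ codeLength n ∧ ∃ q ≤ n,
        (x = 4 * q + 0 ∧ y = q) ∨
        (x = 4 * q + 1 ∧ ∃ r ≤ n, reverseBits (codeLength n) q = r ∧ T + r = y) ∨
        (x = 4 * q + 2 ∧ ∃ s ≤ n, T + q = s ∧ s + s = y) ∨
        (x = 4 * q + 3 ∧ ∃ e ≤ n, exponentSwap (codeLength n) q = e ∧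
          ∃ s ≤ n, T + e = s ∧ ∃ d ≤ n, s + s = d ∧ y = d + 1) := by
    intro α a b
    apply_rules [UniformlyDefinable.ex, UniformlyDefinable.and, UniformlyDefinable.or]
  refine h.congr fun n hn x hx y hy => ?_
  have hTn := four_mul_two_pow_codeLength_le hn
  rw [baseMap_eq_iff]
  constructor
  · rintro ⟨_, -, rfl, q, -, h | ⟨hq, r, -, hr, h⟩ | ⟨hq, s, -, hs, h⟩ |
      ⟨hq, e, -, he, s, -, hs, d, -, hd, h⟩⟩ <;> exact ⟨q, by omega⟩
  · rintro ⟨q, h⟩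
    refine ⟨_, by omega, rfl, q, by omega, ?_⟩
    rcases h with h | ⟨hq, h⟩ | ⟨hq, h⟩ | ⟨hq, h⟩
    · exact Or.inl h
    · exact Or.inr (Or.inl ⟨hq, _, by omega, rfl, h⟩)
    · exact Or.inr (Or.inr (Or.inl ⟨hq, _, by omega, rfl, by omega⟩))
    · exact Or.inr (Or.inr (Or.inr
        ⟨hq, _, by omega, rfl, _, by omega, rfl, _, by omega, rfl, by omega⟩))

theorem uniformlyDefinable₂_bit_builtinMap_of_four_le :
    UniformlyDefinable₂ bitStruct {n | 4 ≤ n} fun n x y => builtinMap n x = y := by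
  have hlt := uniformlyDefinable₂_bit_lt (I := {n | 4 ≤ n})
  have hadd := uniformlyDefinable₃_bit_add (I := {n | 4 ≤ n})
  have hfour := uniformlyDefinable₂_bit_four_mul_add (I := {n | 4 ≤ n}) 0
  have hT := uniformlyDefinable₁_bit_two_pow_codeLength
  have hbase := uniformlyDefinable₂_bit_baseMap
  have h : UniformlyDefinable₂ bitStruct {n | 4 ≤ n} fun n x y =>
      ∃ T ≤ n, T = 2 ^ codeLength n ∧ ∃ P ≤ n, P = 4 * T + 0 ∧
        (x + P = y ∨ (¬ ∃ z ≤ n, x + P = z) ∧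
          ((x < P ∧ baseMap (codeLength n) x = y) ∨
            ∃ r ≤ n, r + P = x ∧ baseMap (codeLength n) r = y)) := by
    intro α a b
    apply_rules [UniformlyDefinable.ex, UniformlyDefinable.and, UniformlyDefinable.or,
      UniformlyDefinable.not]
  refine h.congr fun n hn x hx y hy => ?_
  have hP := four_mul_two_pow_codeLength_le hn
  rw [builtinMap_eq_iff hn hy]
  constructor
  · rintro ⟨_, -, rfl, _, -, rfl, h | ⟨hshift, h⟩⟩
    · exact Or.inl h
    · refine Or.inr ⟨fun hle => hshift ⟨_, hle, rfl⟩, h.imp_right ?_⟩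
      rintro ⟨r, -, hr⟩
      exact ⟨r, hr⟩
  · refine fun h => ⟨_, by omega, rfl, _, hP, rfl, h.imp_right ?_⟩
    rintro ⟨hshift, h⟩
    refine ⟨fun ⟨_, hz, hxz⟩ => hshift (hxz.trans_le hz), h.imp_right ?_⟩
    rintro ⟨r, hr⟩
    exact ⟨r, by omega, hr⟩

theorem uniformlyDefinable₂_bit_builtinMap :
    UniformlyDefinable₂ bitStruct Set.univ fun n x y => builtinMap n x = y := by
  intro α a b
  refine (uniformlyDefinable_const_le uniformlyDefinable₂_bit_lt 4).of_compl
    (uniformlyDefinable₂_bit_builtinMap_of_four_le a b)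
    ((uniformlyDefinable₂_eq a b).congr fun n hn v _ => ?_)
  simp only [builtinMap_of_lt_four (not_le.1 hn)]

end Bit

/-! ### `Bit` from the permutation -/

theorem uniformlyDefinable₂_perm_lt {π : ∀ n, Equiv.Perm (Fin (n + 1))} {I : Set ℕ} :
    UniformlyDefinable₂ (permStruct π) I fun _ x y => x < y := by
  intro α a b
  let r : LPerm.Relations 2 := PermRel.lt
  refine ⟨r.formula₂ (Term.var a) (Term.var b), fun n _ v => ?_⟩
  let _ := permStruct π n
  rw [Formula.realize_rel₂]
  rfl

theorem uniformlyDefinable₂_perm_builtinMap {I : Set ℕ} :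
    UniformlyDefinable₂ (permStruct builtinPerm) I fun n x y => builtinMap n x = y := by
  intro α a b
  let r : LPerm.Relations 2 := PermRel.perm
  refine ⟨r.formula₂ (Term.var a) (Term.var b), fun n _ v => ?_⟩
  let _ := permStruct builtinPerm n
  rw [Formula.realize_rel₂]
  exact builtinPerm_apply_eq_iff

theorem uniformlyDefinable₁_perm_eq_four_mul_two_pow :
    UniformlyDefinable₁ (permStruct builtinPerm) {n | 4 ≤ n}
      fun n x => x = 4 * 2 ^ codeLength n := by
  have hzero := uniformlyDefinable₁_eq_const
    (uniformlyDefinable₂_perm_lt (π := builtinPerm) (I := {n | 4 ≤ n})) 0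
  have hmap := uniformlyDefinable₂_perm_builtinMap (I := {n | 4 ≤ n})
  have h : UniformlyDefinable₁ (permStruct builtinPerm) {n | 4 ≤ n} fun n x =>
      ∃ z ≤ n, z = 0 ∧ builtinMap n z = x := by
    intro α a
    apply_rules [UniformlyDefinable.ex, UniformlyDefinable.and]
  refine h.congr fun n hn x hx => ?_
  have hP : 0 + 4 * 2 ^ codeLength n ≤ n := by
    rw [zero_add]
    exact four_mul_two_pow_codeLength_le hn
  have hmap_zero : builtinMap n 0 = x ↔ x = 4 * 2 ^ codeLength n := by
    rw [builtinMap_eq_iff hn hx]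
    simp only [hP, not_true_eq_false, false_and, or_false]
    omega
  rw [← hmap_zero]
  exact ⟨fun ⟨_, _, hz, hzx⟩ => hz ▸ hzx, fun h => ⟨0, n.zero_le, rfl, h⟩⟩

theorem uniformlyDefinable₁_perm_lt_four_mul_two_pow :
    UniformlyDefinable₁ (permStruct builtinPerm) {n | 4 ≤ n}
      fun n x => x < 4 * 2 ^ codeLength n := by
  have h : UniformlyDefinable₁ (permStruct builtinPerm) {n | 4 ≤ n} fun n x =>
      ∃ P ≤ n, P = 4 * 2 ^ codeLength n ∧ x < P := fun _ _ => UniformlyDefinable.ex <|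
    (uniformlyDefinable₁_perm_eq_four_mul_two_pow _).and (uniformlyDefinable₂_perm_lt _ _)
  refine h.congr fun n hn x _ => ⟨fun ⟨_, _, hP, hx⟩ => hP ▸ hx, fun hx => ?_⟩
  exact ⟨_, four_mul_two_pow_codeLength_le hn, rfl, hx⟩

theorem uniformlyDefinable₂_perm_eq_add_four_mul_two_pow :
    UniformlyDefinable₂ (permStruct builtinPerm) {n | 4 ≤ n}
      fun n x y => y = x + 4 * 2 ^ codeLength n := by
  have h : UniformlyDefinable₂ (permStruct builtinPerm) {n | 4 ≤ n} fun n x y =>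
      builtinMap n x = y ∧ ¬ y < 4 * 2 ^ codeLength n := fun _ _ _ =>
    (uniformlyDefinable₂_perm_builtinMap _ _).and
      (uniformlyDefinable₁_perm_lt_four_mul_two_pow _).not
  refine h.congr fun n hn x hx y hy => ⟨?_, fun hxy => ?_⟩
  · rintro ⟨rfl, hge⟩
    exact (builtinMap_lt_or_eq_add hn hx).resolve_left hge
  · exact ⟨(builtinMap_eq_iff hn hy).2 (Or.inl hxy.symm), by omega⟩

theorem uniformlyDefinable₂_perm_baseMap :
    UniformlyDefinable₂ (permStruct builtinPerm) {n | 4 ≤ n}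
      fun n x y => x < 4 * 2 ^ codeLength n ∧ baseMap (codeLength n) x = y := by
  have hmap := uniformlyDefinable₂_perm_builtinMap (I := {n | 4 ≤ n})
  have hlt := uniformlyDefinable₁_perm_lt_four_mul_two_pow
  have hadd := uniformlyDefinable₂_perm_eq_add_four_mul_two_pow
  have h : UniformlyDefinable₂ (permStruct builtinPerm) {n | 4 ≤ n} fun n x y =>
      x < 4 * 2 ^ codeLength n ∧ y < 4 * 2 ^ codeLength n ∧
        (builtinMap n x = y ∨ ∃ z ≤ n, z = x + 4 * 2 ^ codeLength n ∧ builtinMap n z = y) := by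
    intro α a b
    apply_rules [UniformlyDefinable.ex, UniformlyDefinable.and, UniformlyDefinable.or]
  refine h.congr fun n hn x _ y _ => and_congr_right fun hx => ?_
  constructor
  · rintro ⟨hy, h⟩
    exact (baseMap_eq_iff_builtinMap hn hx hy).2 h
  · intro h
    have hy : y < 4 * 2 ^ codeLength n := h ▸ baseMap_lt hx
    exact ⟨hy, (baseMap_eq_iff_builtinMap hn hx hy).1 h⟩

theorem uniformlyDefinable₁_perm_lt_two_pow :
    UniformlyDefinable₁ (permStruct builtinPerm) {n | 4 ≤ n}
      fun n x => x < 2 ^ codeLength n := by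
  have hlt := uniformlyDefinable₂_perm_lt (π := builtinPerm) (I := {n | 4 ≤ n})
  have hone := uniformlyDefinable₁_eq_const hlt 1
  have hbase := uniformlyDefinable₂_perm_baseMap
  have h : UniformlyDefinable₁ (permStruct builtinPerm) {n | 4 ≤ n} fun n x =>
      ∃ z ≤ n, z = 1 ∧ ∃ T ≤ n, (z < 4 * 2 ^ codeLength n ∧ baseMap (codeLength n) z = T) ∧
        x < T := fun _ _ => UniformlyDefinable.ex <| (hone _).and <|
    UniformlyDefinable.ex <| (hbase _ _).and (hlt _ _)
  refine h.congr fun n hn x _ => ?_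
  have hP := four_mul_two_pow_codeLength_le hn
  constructor
  · rintro ⟨_, -, rfl, _, -, ⟨-, rfl⟩, hx⟩
    rwa [baseMap_one] at hx
  · exact fun hx => ⟨1, by omega, rfl, _, by omega, ⟨by omega, baseMap_one _⟩, hx⟩

theorem uniformlyDefinable₂_perm_eq_four_mul_add (c : ℕ) :
    UniformlyDefinable₂ (permStruct builtinPerm) {n | 4 ≤ n}
      fun n y x => y < 2 ^ codeLength n ∧ x = 4 * y + c := by
  have hlt := uniformlyDefinable₁_perm_lt_two_pow
  have hbase := uniformlyDefinable₂_perm_baseMap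
  have hadd := uniformlyDefinable₂_eq_add_const
    (uniformlyDefinable₂_perm_lt (π := builtinPerm) (I := {n | 4 ≤ n})) c
  have h : UniformlyDefinable₂ (permStruct builtinPerm) {n | 4 ≤ n} fun n y x =>
      y < 2 ^ codeLength n ∧
        ∃ w ≤ n, (w < 4 * 2 ^ codeLength n ∧ baseMap (codeLength n) w = y) ∧ x = w + c :=
    fun _ _ _ => (hlt _).and <| UniformlyDefinable.ex <| (hbase _ _).and (hadd _ _)
  refine h.congr fun n _ y _ x _ => and_congr_right fun hy => ⟨?_, fun hx => ?_⟩
  · rintro ⟨w, -, ⟨hw, hwy⟩, rfl⟩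
    have hw4 : w = 4 * y := injOn_baseMap (codeLength n) hw
      (show 4 * y < 4 * 2 ^ codeLength n by omega) (hwy.trans (baseMap_four_mul _ y).symm)
    rw [hw4]
  · exact ⟨4 * y, by omega, ⟨by omega, baseMap_four_mul _ y⟩, hx⟩

theorem uniformlyDefinable₂_perm_baseMap_four_mul_add {c : ℕ} (hc : c < 4) :
    UniformlyDefinable₂ (permStruct builtinPerm) {n | 4 ≤ n}
      fun n y z => y < 2 ^ codeLength n ∧ baseMap (codeLength n) (4 * y + c) = z := by
  have h : UniformlyDefinable₂ (permStruct builtinPerm) {n | 4 ≤ n} fun n y z =>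
      ∃ x ≤ n, (y < 2 ^ codeLength n ∧ x = 4 * y + c) ∧
        x < 4 * 2 ^ codeLength n ∧ baseMap (codeLength n) x = z := fun _ _ _ =>
    UniformlyDefinable.ex <| (uniformlyDefinable₂_perm_eq_four_mul_add c _ _).and
      (uniformlyDefinable₂_perm_baseMap _ _)
  refine h.congr fun n hn y _ z _ => ?_
  have hP := four_mul_two_pow_codeLength_le hn
  constructor
  · rintro ⟨_, -, ⟨hy, rfl⟩, -, hz⟩
    exact ⟨hy, hz⟩
  · rintro ⟨hy, hz⟩
    exact ⟨_, by omega, ⟨hy, rfl⟩, by omega, hz⟩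

theorem uniformlyDefinable₂_perm_reverseBits_le :
    UniformlyDefinable₂ (permStruct builtinPerm) {n | 4 ≤ n}
      fun n x y => x < 2 ^ codeLength n ∧ y < 2 ^ codeLength n ∧
        reverseBits (codeLength n) x ≤ reverseBits (codeLength n) y := by
  have hone := uniformlyDefinable₂_perm_baseMap_four_mul_add (c := 1) (by omega)
  have hle := uniformlyDefinable₂_le
    (uniformlyDefinable₂_perm_lt (π := builtinPerm) (I := {n | 4 ≤ n}))
  have h : UniformlyDefinable₂ (permStruct builtinPerm) {n | 4 ≤ n} fun n x y =>
      ∃ u ≤ n, (x < 2 ^ codeLength n ∧ baseMap (codeLength n) (4 * x + 1) = u) ∧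
        ∃ v ≤ n, (y < 2 ^ codeLength n ∧ baseMap (codeLength n) (4 * y + 1) = v) ∧ u ≤ v :=
    fun _ _ _ => UniformlyDefinable.ex <| (hone _ _).and <| UniformlyDefinable.ex <|
      (hone _ _).and (hle _ _)
  refine h.congr fun n hn x _ y _ => ?_
  have hP := four_mul_two_pow_codeLength_le hn
  have hrev := reverseBits_lt (codeLength n) y
  simp only [baseMap_four_mul_add_one]
  constructor
  · rintro ⟨_, -, ⟨hx, rfl⟩, _, -, ⟨hy, rfl⟩, hxy⟩
    exact ⟨hx, hy, by omega⟩
  · rintro ⟨hx, hy, hxy⟩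
    exact ⟨_, by omega, ⟨hx, rfl⟩, _, by omega, ⟨hy, rfl⟩, by omega⟩

theorem uniformlyDefinable₂_perm_exponentSwap :
    UniformlyDefinable₂ (permStruct builtinPerm) {n | 4 ≤ n}
      fun n u w => u < 2 ^ codeLength n ∧ exponentSwap (codeLength n) u = w := by
  have htwo := uniformlyDefinable₂_perm_baseMap_four_mul_add (c := 2) (by omega)
  have hthree := uniformlyDefinable₂_perm_baseMap_four_mul_add (c := 3) (by omega)
  have hsucc := uniformlyDefinable₂_eq_succ
    (uniformlyDefinable₂_perm_lt (π := builtinPerm) (I := {n | 4 ≤ n}))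
  have h : UniformlyDefinable₂ (permStruct builtinPerm) {n | 4 ≤ n} fun n u w =>
      ∃ b ≤ n, (u < 2 ^ codeLength n ∧ baseMap (codeLength n) (4 * u + 3) = b) ∧
        ∃ a ≤ n, (w < 2 ^ codeLength n ∧ baseMap (codeLength n) (4 * w + 2) = a) ∧ b = a + 1 :=
    fun _ _ _ => UniformlyDefinable.ex <| (hthree _ _).and <| UniformlyDefinable.ex <|
      (htwo _ _).and (hsucc _ _)
  refine h.congr fun n hn u _ w _ => ?_
  have hP := four_mul_two_pow_codeLength_le hn
  simp only [baseMap_four_mul_add_two, baseMap_four_mul_add_three]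
  constructor
  · rintro ⟨_, -, ⟨hu, rfl⟩, _, -, ⟨-, rfl⟩, huw⟩
    exact ⟨hu, by omega⟩
  · rintro ⟨hu, rfl⟩
    have hw := exponentSwap_lt hu
    exact ⟨_, by omega, ⟨hu, rfl⟩, _, by omega, ⟨hw, rfl⟩, rfl⟩

theorem uniformlyDefinable₂_perm_two_pow_dvd :
    UniformlyDefinable₂ (permStruct builtinPerm) {n | 4 ≤ n}
      fun n i x => i < 2 ^ codeLength n ∧ x < 2 ^ codeLength n ∧ 2 ^ i ∣ x := by
  have hlt := uniformlyDefinable₂_perm_lt (π := builtinPerm) (I := {n | 4 ≤ n})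
  have hzero := uniformlyDefinable₁_eq_const hlt 0
  have hltT := uniformlyDefinable₁_perm_lt_two_pow
  have hrev := uniformlyDefinable₂_perm_reverseBits_le
  have hswap := uniformlyDefinable₂_perm_exponentSwap
  have h : UniformlyDefinable₂ (permStruct builtinPerm) {n | 4 ≤ n} fun n i x =>
      i < 2 ^ codeLength n ∧ x < 2 ^ codeLength n ∧ (x = 0 ∨
        ∃ g ≤ n, (i < 2 ^ codeLength n ∧ exponentSwap (codeLength n) i = g) ∧ i < g ∧
          (x < 2 ^ codeLength n ∧ g < 2 ^ codeLength n ∧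
            reverseBits (codeLength n) x ≤ reverseBits (codeLength n) g)) := fun _ _ _ =>
    (hltT _).and <| (hltT _).and <| (hzero _).or <| UniformlyDefinable.ex <|
      (hswap _ _).and <| (hlt _ _).and (hrev _ _)
  refine h.congr fun n hn i _ x _ => and_congr_right fun hi => and_congr_right fun hx => ?_
  have hP := four_mul_two_pow_codeLength_le hn
  have hg := exponentSwap_lt hi
  rw [two_pow_dvd_iff_exponentSwap hx]
  refine or_congr_right ⟨?_, fun ⟨hig, hle⟩ => ?_⟩
  · rintro ⟨_, -, ⟨-, rfl⟩, hig, -, -, hle⟩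
    exact ⟨hig, hle⟩
  · exact ⟨_, by omega, ⟨hi, rfl⟩, hig, hx, hg, hle⟩

theorem uniformlyDefinable₂_perm_testBit_of_lt_two_pow :
    UniformlyDefinable₂ (permStruct builtinPerm) {n | 4 ≤ n}
      fun n a i => a < 2 ^ codeLength n ∧ a.testBit i := by
  have hlt := uniformlyDefinable₂_perm_lt (π := builtinPerm) (I := {n | 4 ≤ n})
  have hle := uniformlyDefinable₂_le hlt
  have hsucc := uniformlyDefinable₂_eq_succ hlt
  have hltT := uniformlyDefinable₁_perm_lt_two_pow
  have hdvd := uniformlyDefinable₂_perm_two_pow_dvd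
  have h : UniformlyDefinable₂ (permStruct builtinPerm) {n | 4 ≤ n} fun n a i =>
      a < 2 ^ codeLength n ∧ ∃ j ≤ n, j = i + 1 ∧ j < 2 ^ codeLength n ∧ ∃ x ≤ n, x ≤ a ∧
        (i < 2 ^ codeLength n ∧ x < 2 ^ codeLength n ∧ 2 ^ i ∣ x) ∧ ∀ y ≤ n, x ≤ y → y ≤ a →
          ¬ (j < 2 ^ codeLength n ∧ y < 2 ^ codeLength n ∧ 2 ^ j ∣ y) := fun _ _ _ =>
    (hltT _).and <| UniformlyDefinable.ex <| (hsucc _ _).and <| (hltT _).and <|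
      UniformlyDefinable.ex <| (hle _ _).and <| (hdvd _ _).and <| UniformlyDefinable.all <|
        (hle _ _).imp <| (hle _ _).imp (hdvd _ _).not
  refine h.congr fun n hn a _ i _ => and_congr_right fun ha => ?_
  have hP := four_mul_two_pow_codeLength_le hn
  rw [testBit_iff_exists_two_pow_dvd]
  constructor
  · rintro ⟨_, -, rfl, hj, x, -, hxa, ⟨-, -, hx⟩, hgap⟩
    exact ⟨x, hxa, hx, fun y hxy hya hy => hgap y (by omega) hxy hya ⟨hj, by omega, hy⟩⟩
  · intro hbit
    have hi : i < codeLength n :=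
      lt_two_pow_iff_forall_testBit.1 ha i (testBit_iff_exists_two_pow_dvd.2 hbit)
    have hlen : codeLength n < 2 ^ codeLength n := Nat.lt_two_pow_self
    obtain ⟨x, hxa, hx, hgap⟩ := hbit
    exact ⟨i + 1, by omega, rfl, by omega, x, by omega, hxa, ⟨by omega, by omega, hx⟩,
      fun y _ hxy hya hy => hgap y hxy hya hy.2.2⟩

theorem uniformlyDefinable₂_perm_testBit_of_eq_four_mul_add {c : ℕ} (hc : c < 4) :
    UniformlyDefinable₂ (permStruct builtinPerm) {n | 4 ≤ n}
      fun n x i => (∃ y < 2 ^ codeLength n, x = 4 * y + c) ∧ x.testBit i := by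
  have hlt := uniformlyDefinable₂_perm_lt (π := builtinPerm) (I := {n | 4 ≤ n})
  have hconst := uniformlyDefinable₁_eq_const hlt
  have hadd := uniformlyDefinable₂_eq_add_const hlt 2
  have hfour := uniformlyDefinable₂_perm_eq_four_mul_add c
  have hbit := uniformlyDefinable₂_perm_testBit_of_lt_two_pow
  have h : UniformlyDefinable₂ (permStruct builtinPerm) {n | 4 ≤ n} fun n x i =>
      ∃ y ≤ n, (y < 2 ^ codeLength n ∧ x = 4 * y + c) ∧
        ((i = 0 ∧ (c = 1 ∨ c = 3)) ∨ (i = 1 ∧ (c = 2 ∨ c = 3)) ∨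
          ∃ j ≤ n, i = j + 2 ∧ y < 2 ^ codeLength n ∧ y.testBit j) := fun _ _ _ =>
    UniformlyDefinable.ex <| (hfour _ _).and <|
      ((hconst 0 _).and (uniformlyDefinable_const _)).or <|
        ((hconst 1 _).and (uniformlyDefinable_const _)).or <|
          UniformlyDefinable.ex <| (hadd _ _).and (hbit _ _)
  refine h.congr fun n _ x _ i _ => ?_
  constructor
  · rintro ⟨y, -, ⟨hy, rfl⟩, h⟩
    refine ⟨⟨y, hy, rfl⟩, (testBit_four_mul_add hc y i).2 (h.imp_right (Or.imp_right ?_))⟩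
    exact fun ⟨j, _, hij, _, hbit⟩ => ⟨j, hij, hbit⟩
  · rintro ⟨⟨y, hy, rfl⟩, h⟩
    refine ⟨y, by omega, ⟨hy, rfl⟩,
      ((testBit_four_mul_add hc y i).1 h).imp_right (Or.imp_right ?_)⟩
    exact fun ⟨j, hij, hbit⟩ => ⟨j, by omega, hij, hy, hbit⟩

theorem uniformlyDefinable₂_perm_testBit_of_lt_four_mul_two_pow :
    UniformlyDefinable₂ (permStruct builtinPerm) {n | 4 ≤ n}
      fun n x i => x < 4 * 2 ^ codeLength n ∧ x.testBit i := by
  have hdigit (c : ℕ) (hc : c < 4) := uniformlyDefinable₂_perm_testBit_of_eq_four_mul_add hc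
  have h : UniformlyDefinable₂ (permStruct builtinPerm) {n | 4 ≤ n} fun n x i =>
      ((∃ y < 2 ^ codeLength n, x = 4 * y + 0) ∧ x.testBit i) ∨
      ((∃ y < 2 ^ codeLength n, x = 4 * y + 1) ∧ x.testBit i) ∨
      ((∃ y < 2 ^ codeLength n, x = 4 * y + 2) ∧ x.testBit i) ∨
      ((∃ y < 2 ^ codeLength n, x = 4 * y + 3) ∧ x.testBit i) := fun _ _ _ =>
    (hdigit 0 (by omega) _ _).or <| (hdigit 1 (by omega) _ _).or <|
      (hdigit 2 (by omega) _ _).or (hdigit 3 (by omega) _ _)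
  refine h.congr fun n _ x _ i _ => ?_
  simp only [← or_and_right]
  refine and_congr_left fun _ => ⟨?_, fun hx => ?_⟩
  · rintro (⟨y, hy, rfl⟩ | ⟨y, hy, rfl⟩ | ⟨y, hy, rfl⟩ | ⟨y, hy, rfl⟩) <;> omega
  · obtain ⟨y, rfl | rfl | rfl | rfl⟩ := exists_eq_four_mul_add x
    · exact Or.inl ⟨y, by omega, rfl⟩
    · exact Or.inr (Or.inl ⟨y, by omega, rfl⟩)
    · exact Or.inr (Or.inr (Or.inl ⟨y, by omega, rfl⟩))
    · exact Or.inr (Or.inr (Or.inr ⟨y, by omega, rfl⟩))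

theorem le_codeLength_add_two_iff {n i : ℕ} (hn : 4 ≤ n) : codeLength n + 2 ≤ i ↔
    ∀ x ≤ n, ¬ (x < 4 * 2 ^ codeLength n ∧ x.testBit i) := by
  have hP := four_mul_two_pow_codeLength_le hn
  rw [four_mul_two_pow] at hP ⊢
  constructor
  · rintro hi x - ⟨hx, hbit⟩
    exact (lt_two_pow_iff_forall_testBit.1 hx i hbit).not_ge hi
  · intro h
    by_contra! hi
    have hlt : 2 ^ i < 2 ^ (codeLength n + 2) := Nat.pow_lt_pow_right one_lt_two hi
    exact h (2 ^ i) (hlt.le.trans hP) ⟨hlt, Nat.testBit_two_pow_self⟩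

theorem uniformlyDefinable₁_perm_eq_codeLength_add_two :
    UniformlyDefinable₁ (permStruct builtinPerm) {n | 4 ≤ n}
      fun n i => i = codeLength n + 2 := by
  have hle := uniformlyDefinable₂_le
    (uniformlyDefinable₂_perm_lt (π := builtinPerm) (I := {n | 4 ≤ n}))
  have hge : UniformlyDefinable₁ (permStruct builtinPerm) {n | 4 ≤ n} fun n i =>
      codeLength n + 2 ≤ i := by
    have h : UniformlyDefinable₁ (permStruct builtinPerm) {n | 4 ≤ n} fun n i =>
        ∀ x ≤ n, ¬ (x < 4 * 2 ^ codeLength n ∧ x.testBit i) := fun _ _ =>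
      UniformlyDefinable.all (uniformlyDefinable₂_perm_testBit_of_lt_four_mul_two_pow _ _).not
    exact h.congr fun n hn i _ => (le_codeLength_add_two_iff hn).symm
  have h : UniformlyDefinable₁ (permStruct builtinPerm) {n | 4 ≤ n} fun n i =>
      codeLength n + 2 ≤ i ∧ ∀ j ≤ n, codeLength n + 2 ≤ j → i ≤ j := fun _ _ =>
    (hge _).and (UniformlyDefinable.all ((hge _).imp (hle _ _)))
  refine h.congr fun n hn i _ => ⟨fun ⟨hi, hmin⟩ => ?_, fun hi => ⟨hi.ge, fun j _ hj => by omega⟩⟩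
  have hle : codeLength n + 2 ≤ n := le_of_two_pow_le <|
    (four_mul_two_pow _).symm.trans_le (four_mul_two_pow_codeLength_le hn)
  exact (hmin _ hle le_rfl).antisymm hi

theorem uniformlyDefinable₂_perm_testBit_of_four_le :
    UniformlyDefinable₂ (permStruct builtinPerm) {n | 4 ≤ n} fun _ x i => x.testBit i := by
  have hlow := uniformlyDefinable₂_perm_testBit_of_lt_four_mul_two_pow
  have hadd := uniformlyDefinable₂_perm_eq_add_four_mul_two_pow
  have htop := uniformlyDefinable₁_perm_eq_codeLength_add_two
  have h : UniformlyDefinable₂ (permStruct builtinPerm) {n | 4 ≤ n} fun n x i =>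
      (x < 4 * 2 ^ codeLength n ∧ x.testBit i) ∨
        ∃ r ≤ n, x = r + 4 * 2 ^ codeLength n ∧
          (i = codeLength n + 2 ∨ (r < 4 * 2 ^ codeLength n ∧ r.testBit i)) := fun _ _ _ =>
    (hlow _ _).or <| UniformlyDefinable.ex <| (hadd _ _).and <| (htop _).or (hlow _ _)
  refine h.congr fun n hn x hx i _ => ?_
  have hlt := lt_eight_mul_two_pow_codeLength hn
  have htail (r : ℕ) (hr : r < 4 * 2 ^ codeLength n) :
      (r + 4 * 2 ^ codeLength n).testBit i ↔ i = codeLength n + 2 ∨ r.testBit i := by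
    rw [four_mul_two_pow] at hr ⊢
    exact testBit_add_two_pow hr i
  constructor
  · rintro (⟨-, h⟩ | ⟨r, -, rfl, h⟩)
    · exact h
    · exact (htail r (by omega)).2 (h.imp_right And.right)
  · intro h
    rcases lt_or_ge x (4 * 2 ^ codeLength n) with hx | hx
    · exact Or.inl ⟨hx, h⟩
    · obtain ⟨r, rfl⟩ := Nat.exists_eq_add_of_le' hx
      have hr : r < 4 * 2 ^ codeLength n := by omega
      exact Or.inr ⟨r, by omega, rfl, ((htail r hr).1 h).imp_right (And.intro hr)⟩

theorem uniformlyDefinable₂_perm_testBit_of_lt_four :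
    UniformlyDefinable₂ (permStruct builtinPerm) {n | ¬ 4 ≤ n} fun _ x i => x.testBit i := by
  have hconst := uniformlyDefinable₁_eq_const
    (uniformlyDefinable₂_perm_lt (π := builtinPerm) (I := {n | ¬ 4 ≤ n}))
  have h : UniformlyDefinable₂ (permStruct builtinPerm) {n | ¬ 4 ≤ n} fun _ x i =>
      (i = 0 ∧ (x = 1 ∨ x = 3)) ∨ (i = 1 ∧ (x = 2 ∨ x = 3)) := fun _ _ _ =>
    ((hconst 0 _).and ((hconst 1 _).or (hconst 3 _))).or
      ((hconst 1 _).and ((hconst 2 _).or (hconst 3 _)))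
  refine h.congr fun n hn x hx i _ => ?_
  have hbit := testBit_four_mul_add (c := x) (by have : ¬ 4 ≤ n := hn; omega) 0 i
  simp only [mul_zero, zero_add, Nat.zero_testBit, Bool.false_eq_true, and_false, exists_false,
    or_false] at hbit
  exact hbit.symm

theorem uniformlyDefinable₂_perm_testBit :
    UniformlyDefinable₂ (permStruct builtinPerm) Set.univ fun _ x i => x.testBit i := fun _ a b =>
  (uniformlyDefinable_const_le uniformlyDefinable₂_perm_lt 4).of_compl
    (uniformlyDefinable₂_perm_testBit_of_four_le a b)
    (uniformlyDefinable₂_perm_testBit_of_lt_four a b)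

/-- Corollary 5.3: there is a built-in permutation `π = (πₙ)ₙ` such
that (i) an `FO(<,π)`-formula defines `Bit` in `({0,...,n}, <, graph of πₙ)` for every
`n`, and (ii) an `FO(Bit)`-formula defines the graph of `πₙ` in `({0,...,n}, Bit)` for
every `n`. -/
theorem builtin_permutation_captures_Bit :
    ∃ π : (n : ℕ) → Equiv.Perm (Fin (n + 1)),
      (∃ φ : LPerm.Formula (Fin 2),
        ∀ n : ℕ,
          letI := permStruct π n
          ∀ a b : Fin (n + 1),
            φ.Realize ![a, b] ↔ Nat.testBit (a : ℕ) (b : ℕ) = true) ∧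
      (∃ ψ : LBit.Formula (Fin 2),
        ∀ n : ℕ,
          letI := bitStruct n
          ∀ a b : Fin (n + 1), ψ.Realize ![a, b] ↔ π n a = b) := by
  refine ⟨builtinPerm, ?_, ?_⟩
  · obtain ⟨φ, hφ⟩ := uniformlyDefinable₂_perm_testBit (0 : Fin 2) 1
    exact ⟨φ, fun n a b => hφ n (Set.mem_univ n) ![a, b]⟩
  · obtain ⟨ψ, hψ⟩ := uniformlyDefinable₂_bit_builtinMap (0 : Fin 2) 1
    exact ⟨ψ, fun n a b =>
      (hψ n (Set.mem_univ n) ![a, b]).trans builtinPerm_apply_eq_iff.symm⟩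
end

section
/- For all natural numbers x and y: r(x) = r(y) if and only if there is no z ∈ ℕ with r(z) = c(z) such that (x ◁ z and (z ◁ y or z = y)) or (y ◁ z and (z ◁ x or z = x)). (Two elements lie in the same row iff no diagonal element lies between them with respect to ◁.) -/
open FirstOrder Language

/-- `q_i = i(i+1)/2`, the smallest element of column `i`. -/
def qseq (i : ℕ) : ℕ := i * (i + 1) / 2

/-- `c(x)`, the column number of `x`: the largest `i` with `q_i ≤ x`. -/
def col (x : ℕ) : ℕ := Nat.findGreatest (fun i => qseq i ≤ x) x

/-- `q(x) = q_{c(x)}`, the bottom-most element of the column of `x`. -/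
def qf (x : ℕ) : ℕ := qseq (col x)

/-- `r(x) = x - q(x)`, the row number of `x`. -/
def rowf (x : ℕ) : ℕ := x - qf x

/-- The row-major linear order `◁`. -/
def ordc (x y : ℕ) : Prop := rowf x < rowf y ∨ (rowf x = rowf y ∧ col x < col y)

/-!
The element `q_k + k` lies in row `k` and column `k`, and no element of row `k` lies in an earlier
column, so the diagonal element of a row is its `◁`-least element. Hence for diagonal `z` the
condition `x ◁ z ⊴ y` says only that `r(x) < r(z) ≤ r(y)`, and such a `z` exists exactly when
`r(x) < r(y)`.
-/

theorem qseq_succ (i : ℕ) : qseq (i + 1) = qseq i + (i + 1) := by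
  simpa [qseq, mul_comm] using Nat.triangle_succ (i + 1)

theorem qseq_strictMono : StrictMono qseq :=
  strictMono_nat_of_lt_succ fun i => by rw [qseq_succ]; omega

theorem galoisConnection_qseq_col : GaloisConnection qseq col := by
  intro i x
  constructor
  · intro h
    exact Nat.le_findGreatest (qseq_strictMono.le_apply.trans h) h
  · intro h
    have qseq_col_le : qseq (col x) ≤ x :=
      Nat.findGreatest_spec (P := fun i => qseq i ≤ x) x.zero_le (by simp [qseq])
    exact (qseq_strictMono.monotone h).trans qseq_col_le

theorem qseq_col_add_rowf (x : ℕ) : qseq (col x) + rowf x = x :=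
  Nat.add_sub_of_le (galoisConnection_qseq_col.l_u_le x)

theorem rowf_le_col (x : ℕ) : rowf x ≤ col x := by
  have x_lt : x < qseq (col x + 1) := galoisConnection_qseq_col.lt_iff_lt.mpr (Nat.lt_succ_self _)
  rw [qseq_succ] at x_lt
  have x_eq := qseq_col_add_rowf x
  omega

theorem eq_of_rowf_eq_of_col_eq {x y : ℕ} (hrow : rowf x = rowf y) (hcol : col x = col y) :
    x = y := by
  rw [← qseq_col_add_rowf x, ← qseq_col_add_rowf y, hrow, hcol]

theorem col_qseq_add {i j : ℕ} (h : j ≤ i) : col (qseq i + j) = i := by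
  apply le_antisymm
  · apply Nat.le_of_lt_succ
    apply galoisConnection_qseq_col.lt_iff_lt.mp
    rw [qseq_succ]
    omega
  · exact galoisConnection_qseq_col.le_u (Nat.le_add_right _ _)

theorem rowf_qseq_add {i j : ℕ} (h : j ≤ i) : rowf (qseq i + j) = j := by
  rw [rowf, qf, col_qseq_add h, Nat.add_sub_cancel_left]

theorem col_le_col_of_diag {x z : ℕ} (hz : rowf z = col z) (hrow : rowf z = rowf x) :
    col z ≤ col x :=
  calc
    col z = rowf x := hz.symm.trans hrow
    _ ≤ col x := rowf_le_col x

theorem ordc_iff_rowf_lt_of_diag {x z : ℕ} (hz : rowf z = col z) :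
    ordc x z ↔ rowf x < rowf z := by
  refine or_iff_left ?_
  rintro ⟨hrow, hcol⟩
  exact hcol.not_ge (col_le_col_of_diag hz hrow.symm)

theorem ordc_or_eq_iff_rowf_le_of_diag {y z : ℕ} (hz : rowf z = col z) :
    ordc z y ∨ z = y ↔ rowf z ≤ rowf y := by
  constructor
  · rintro ((hlt | ⟨heq, -⟩) | rfl)
    exacts [hlt.le, heq.le, le_rfl]
  · intro h
    rcases h.lt_or_eq with hlt | heq
    · exact .inl (.inl hlt)
    · exact (col_le_col_of_diag hz heq).lt_or_eq.imp (fun hcol => .inr ⟨heq, hcol⟩)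
        (eq_of_rowf_eq_of_col_eq heq)

theorem exists_diag_between_iff (x y : ℕ) :
    (∃ z, rowf z = col z ∧ ordc x z ∧ (ordc z y ∨ z = y)) ↔ rowf x < rowf y := by
  constructor
  · rintro ⟨z, hz, hxz, hzy⟩
    exact ((ordc_iff_rowf_lt_of_diag hz).mp hxz).trans_le
      ((ordc_or_eq_iff_rowf_le_of_diag hz).mp hzy)
  · intro h
    let z := qseq (rowf y) + rowf y
    have rowf_z : rowf z = rowf y := rowf_qseq_add le_rfl
    have hz : rowf z = col z := rowf_z.trans (col_qseq_add le_rfl).symm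
    exact ⟨z, hz, (ordc_iff_rowf_lt_of_diag hz).mpr (h.trans_eq rowf_z.symm),
      (ordc_or_eq_iff_rowf_le_of_diag hz).mpr rowf_z.le⟩

/-- two elements lie in the same row iff no diagonal element lies
between them with respect to `◁`. -/
theorem samerow_iff_no_diag_between (x y : ℕ) :
    rowf x = rowf y ↔
      ¬ ∃ z : ℕ, rowf z = col z ∧
        ((ordc x z ∧ (ordc z y ∨ z = y)) ∨ (ordc y z ∧ (ordc z x ∨ z = x))) := by
  simp_rw [and_or_left (a := rowf _ = col _), exists_or, exists_diag_between_iff]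
  rw [← ne_iff_lt_or_gt, not_ne_iff]
end

section
/- For all natural numbers a, b, j, define carry(a,b,j) to hold iff there exists i < j such that bit i of a and bit i of b are both 1, and for every k with i < k < j, bit k of a or bit k of b is 1. Then bit j of a + b is 1 if and only if either carry(a,b,j) fails and the j-th bits of a and b differ, or carry(a,b,j) holds and the j-th bits of a and b agree. (Equivalently, Nat.testBit (a+b) j = Nat.testBit a j XOR Nat.testBit b j XOR carry(a,b,j).) -/
/-- `carry a b j` holds iff the addition of the binary representations of `a` and `b`
produces a carry-bit to be added at position `j`: there is an `i < j` with bit `i`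
of both `a` and `b` equal to 1 such that for all `k` with `i < k < j`, bit `k` of
`a` or of `b` is 1. -/
def carry (a b j : ℕ) : Prop :=
  ∃ i : ℕ, i < j ∧ Nat.testBit a i = true ∧ Nat.testBit b i = true ∧
    ∀ k : ℕ, i < k → k < j → (Nat.testBit a k = true ∨ Nat.testBit b k = true)

/-!
Adding `a` and `b` carries arithmetically into position `j` exactly when
`2 ^ j ≤ a % 2 ^ j + b % 2 ^ j`. This condition is what distinguishes `(a + b) / 2 ^ j` from
`a / 2 ^ j + b / 2 ^ j`, and it agrees with `carry a b j` because both start out false and obey the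
majority recursion of a ripple-carry adder.
-/

theorem not_carry_zero_s18 (a b : ℕ) : ¬ carry a b 0 := by
  simp [carry]

theorem carry_succ_of_testBit {a b j : ℕ} (ha : a.testBit j = true) (hb : b.testBit j = true) :
    carry a b (j + 1) :=
  ⟨j, j.lt_succ_self, ha, hb, fun _ hjk hkj => by omega⟩

theorem carry.succ {a b j : ℕ} (hcarry : carry a b j)
    (hj : a.testBit j = true ∨ b.testBit j = true) : carry a b (j + 1) := by
  obtain ⟨i, hij, ha, hb, hprop⟩ := hcarry
  refine ⟨i, hij.trans j.lt_succ_self, ha, hb, fun k hik hkj => ?_⟩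
  obtain hkj | rfl := Nat.lt_succ_iff_lt_or_eq.mp hkj
  · exact hprop k hik hkj
  · exact hj

theorem carry_succ_iff (a b j : ℕ) :
    carry a b (j + 1) ↔
      (a.testBit j = true ∧ b.testBit j = true) ∨
        ((a.testBit j = true ∨ b.testBit j = true) ∧ carry a b j) := by
  constructor
  · rintro ⟨i, hij, ha, hb, hprop⟩
    obtain hij | rfl := Nat.lt_succ_iff_lt_or_eq.mp hij
    · exact .inr ⟨hprop j hij j.lt_succ_self, i, hij, ha, hb,
        fun k hik hkj => hprop k hik (hkj.trans j.lt_succ_self)⟩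
    · exact .inl ⟨ha, hb⟩
  · rintro (⟨ha, hb⟩ | ⟨hj, hcarry⟩)
    · exact carry_succ_of_testBit ha hb
    · exact hcarry.succ hj

theorem two_pow_succ_le_mod_add_mod_iff (a b j : ℕ) :
    2 ^ (j + 1) ≤ a % 2 ^ (j + 1) + b % 2 ^ (j + 1) ↔
      (a.testBit j = true ∧ b.testBit j = true) ∨
        ((a.testBit j = true ∨ b.testBit j = true) ∧ 2 ^ j ≤ a % 2 ^ j + b % 2 ^ j) := by
  have ha : a % 2 ^ j < 2 ^ j := Nat.mod_lt a (Nat.two_pow_pos j)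
  have hb : b % 2 ^ j < 2 ^ j := Nat.mod_lt b (Nat.two_pow_pos j)
  rw [Nat.mod_pow_succ, Nat.mod_pow_succ, ← Nat.toNat_testBit, ← Nat.toNat_testBit, pow_succ]
  cases a.testBit j <;> cases b.testBit j <;> grind

theorem carry_iff_two_pow_le_mod_add_mod (a b j : ℕ) :
    carry a b j ↔ 2 ^ j ≤ a % 2 ^ j + b % 2 ^ j := by
  induction j with
  | zero => simp [not_carry_zero_s18, Nat.mod_one]
  | succ j ih => rw [carry_succ_iff, two_pow_succ_le_mod_add_mod_iff, ih]

theorem testBit_add_eq_xor (a b j : ℕ) :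
    (a + b).testBit j =
      (a.testBit j ^^ b.testBit j ^^ decide (2 ^ j ≤ a % 2 ^ j + b % 2 ^ j)) := by
  have hdiv : (a + b) / 2 ^ j =
      a / 2 ^ j + b / 2 ^ j + if 2 ^ j ≤ a % 2 ^ j + b % 2 ^ j then 1 else 0 :=
    Nat.add_div (Nat.two_pow_pos j)
  rw [Nat.testBit_eq_decide_div_mod_eq, hdiv]
  grind

/-- bit `j` of `a + b` is 1 iff either no carry occurs at position
`j` and bits `j` of `a` and `b` differ, or a carry occurs at position `j` and bits `j`
of `a` and `b` agree. -/
theorem testBit_add_iff_carry (a b j : ℕ) :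
    Nat.testBit (a + b) j = true ↔
      (¬ carry a b j ∧ Nat.testBit a j ≠ Nat.testBit b j) ∨
      (carry a b j ∧ Nat.testBit a j = Nat.testBit b j) := by
  rw [testBit_add_eq_xor, carry_iff_two_pow_le_mod_add_mod]
  cases a.testBit j <;> cases b.testBit j <;> simp
end
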